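/- There exists a constant C > 0 such that the following holds. If p = p(n) satisfies p(n)·n − log n − log log n → ∞ as n → ∞ and p(n) ≤ 1 for all n, then the probability that a random graph G ∈ G(n,p(n)) is connected and satisfies AC(G) ≤ C log n / p(n) tends to 1 as n → ∞. -/

import Mathlib

open scoped Classical

/-- A permutation of the vertices arising from swapping the agents along the edges of a
matching in `G`: every vertex is fixed, or is swapped with a neighbour. -/
def IsMatchingSwap {V : Type*} (G : SimpleGraph V) (σ : Equiv.Perm V) : Prop :=
  ∀ v : V, σ v = v ∨ (G.Adj v (σ v) ∧ σ (σ v) = v)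

/-- `positions σ i a` is the vertex occupied after `i` rounds by the agent that initially
occupies vertex `a`, when round `j` rearranges agents by the permutation `σ j`. -/
def positions {V : Type*} (σ : ℕ → Equiv.Perm V) : ℕ → V → V
  | 0 => id
  | (i + 1) => (σ i) ∘ positions σ i

/-- The agents starting at `a` and `b` become acquainted within the first `t` rounds:
at some time `i ≤ t` they occupy adjacent vertices of `G`. -/
def Acquainted {V : Type*} (G : SimpleGraph V) (σ : ℕ → Equiv.Perm V) (t : ℕ) (a b : V) : Prop :=
  ∃ i ≤ t, G.Adj (positions σ i a) (positions σ i b)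

/-- The acquaintance time `AC G`: the least number `t` of rounds for which there is a
strategy (a sequence of matchings, one per round, whose swaps move the agents) after which
every pair of distinct agents is acquainted. -/
noncomputable def AC {V : Type*} (G : SimpleGraph V) : ℕ :=
  sInf {t | ∃ σ : ℕ → Equiv.Perm V, (∀ i < t, IsMatchingSwap G (σ i)) ∧
    ∀ a b : V, a ≠ b → Acquainted G σ t a b}

/-- The helicopter acquaintance time `bAC G`: as `AC G`, but each round may rearrange the
agents by an arbitrary permutation of the vertices. -/
noncomputable def bAC {V : Type*} (G : SimpleGraph V) : ℕ :=
  sInf {t | ∃ σ : ℕ → Equiv.Perm V, ∀ a b : V, a ≠ b → Acquainted G σ t a b}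

/-- The probability, under the binomial random graph model `G(n,p)` on vertex set
`{1, …, n}`, of the event `A`. -/
noncomputable def gnpProb (n : ℕ) (p : ℝ) (A : SimpleGraph (Fin n) → Prop) : ℝ :=
  ∑ G : SimpleGraph (Fin n),
    if A G then p ^ G.edgeSet.ncard * (1 - p) ^ (n.choose 2 - G.edgeSet.ncard) else 0

/-! ### Expectation over random subsets of a finite ground set -/

/-- Expectation of `h S`, `S` a `p`-random subset of `F`. -/
noncomputable def Ex {α : Type*} (F : Finset α) (p : ℝ) (h : Finset α → ℝ) : ℝ :=
  ∑ S ∈ F.powerset, p ^ S.card * (1 - p) ^ (F.card - S.card) * h S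

lemma Ex_empty {α : Type*} (p : ℝ) (h : Finset α → ℝ) : Ex ∅ p h = h ∅ := by
  simp [Ex]

lemma Ex_insert {α : Type*} [DecidableEq α] (F : Finset α) (e : α) (he : e ∉ F) (p : ℝ)
    (h : Finset α → ℝ) :
    Ex (insert e F) p h = p * Ex F p (fun S => h (insert e S)) + (1 - p) * Ex F p h := by
  unfold Ex
  rw [Finset.sum_powerset_insert he, add_comm, Finset.mul_sum, Finset.mul_sum]
  congr 1
  · apply Finset.sum_congr rfl
    intro S hS
    have hS' := Finset.mem_powerset.1 hS
    have : e ∉ S := fun h => he (hS' h)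
    rw [Finset.card_insert_of_notMem this, Finset.card_insert_of_notMem he]
    have : F.card + 1 - (S.card + 1) = F.card - S.card := by omega
    rw [this]; ring
  · apply Finset.sum_congr rfl
    intro S hS
    have hS' := Finset.card_le_card (Finset.mem_powerset.1 hS)
    rw [Finset.card_insert_of_notMem he]
    have : F.card + 1 - S.card = (F.card - S.card) + 1 := by omega
    rw [this]; ring

lemma Ex_mono {α : Type*} (F : Finset α) {p : ℝ} (h0 : 0 ≤ p) (h1 : p ≤ 1)
    {h k : Finset α → ℝ} (hk : ∀ S ⊆ F, h S ≤ k S) : Ex F p h ≤ Ex F p k := by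
  unfold Ex
  apply Finset.sum_le_sum
  intro S hS
  have : 0 ≤ 1 - p := by linarith
  exact mul_le_mul_of_nonneg_left (hk S (Finset.mem_powerset.1 hS)) (by positivity)

lemma Ex_add {α : Type*} (F : Finset α) (p : ℝ) (h k : Finset α → ℝ) :
    Ex F p (fun S => h S + k S) = Ex F p h + Ex F p k := by
  simp [Ex, mul_add, Finset.sum_add_distrib]

lemma Ex_const {α : Type*} [DecidableEq α] (F : Finset α) (p c : ℝ) :
    Ex F p (fun _ => c) = c := by
  induction F using Finset.induction_on with
  | empty => simp [Ex_empty]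
  | insert e F he ih => rw [Ex_insert _ _ he, ih]; ring

lemma Ex_sum {α ι : Type*} (F : Finset α) (p : ℝ) (I : Finset ι) (h : ι → Finset α → ℝ) :
    Ex F p (fun S => ∑ i ∈ I, h i S) = ∑ i ∈ I, Ex F p (h i) := by
  unfold Ex
  rw [Finset.sum_comm]
  simp [Finset.mul_sum]

lemma Ex_union {α : Type*} [DecidableEq α] (F : Finset α) (a b p : ℝ)
    (hp : 1 - p = (1 - a) * (1 - b)) (h : Finset α → ℝ) :
    Ex F p h = Ex F a (fun S => Ex F b (fun T => h (S ∪ T))) := by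
  induction F using Finset.induction_on generalizing h with
  | empty => simp [Ex_empty]
  | insert e F he ih =>
    have hp' : p = a + b - a * b := by linarith
    have hadd : ∀ (c d : ℝ) (f g : Finset α → ℝ),
        Ex F a (fun S => c * f S + d * g S) = c * Ex F a f + d * Ex F a g := by
      intro c d f g
      simp only [Ex, Finset.mul_sum, ← Finset.sum_add_distrib]
      apply Finset.sum_congr rfl
      intro S _; ring
    rw [Ex_insert _ _ he, Ex_insert _ _ he]
    simp only [Ex_insert _ _ he, hadd]
    simp only [Finset.insert_union, Finset.union_insert, Finset.insert_idem]
    have i1 := ih (fun S => h (insert e S))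
    have i2 := ih h
    rw [← i1, ← i2, hp']; ring

/-- Indicator of a proposition. -/
noncomputable def ind (P : Prop) : ℝ := if P then 1 else 0

lemma ind_pos {P : Prop} (h : P) : ind P = 1 := if_pos h
lemma ind_neg {P : Prop} (h : ¬ P) : ind P = 0 := if_neg h
lemma ind_nonneg (P : Prop) : 0 ≤ ind P := by unfold ind; split_ifs <;> norm_num
lemma ind_le_one (P : Prop) : ind P ≤ 1 := by unfold ind; split_ifs <;> norm_num
lemma ind_congr {P Q : Prop} (h : P ↔ Q) : ind P = ind Q := by rw [propext h]
lemma ind_mono {P Q : Prop} (h : P → Q) : ind P ≤ ind Q := by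
  by_cases hP : P
  · rw [ind_pos hP, ind_pos (h hP)]
  · rw [ind_neg hP]; exact ind_nonneg _

/-- Probability of an event for a `p`-random subset of `F`. -/
noncomputable def Pr {α : Type*} (F : Finset α) (p : ℝ) (A : Finset α → Prop) : ℝ :=
  Ex F p (fun S => ind (A S))

lemma Pr_mono {α : Type*} (F : Finset α) {p : ℝ} (h0 : 0 ≤ p) (h1 : p ≤ 1)
    {A B : Finset α → Prop} (h : ∀ S ⊆ F, A S → B S) : Pr F p A ≤ Pr F p B := by
  apply Ex_mono F h0 h1
  intro S hS
  exact ind_mono (h S hS)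

lemma Pr_nonneg {α : Type*} (F : Finset α) {p : ℝ} (h0 : 0 ≤ p) (h1 : p ≤ 1)
    (A : Finset α → Prop) : 0 ≤ Pr F p A := by
  have := Ex_mono F h0 h1 (h := fun _ => 0) (k := fun S => ind (A S))
    (fun S _ => ind_nonneg _)
  refine le_trans (le_of_eq ?_) this
  simp [Ex]

lemma Pr_compl {α : Type*} (F : Finset α) (p : ℝ) (A : Finset α → Prop) :
    Pr F p A = 1 - Pr F p (fun S => ¬ A S) := by
  classical
  have h := Ex_add F p (fun S => ind (A S)) (fun S => ind (¬ A S))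
  have h2 : (fun S => ind (A S) + ind (¬ A S)) = fun _ => (1:ℝ) := by
    funext S; by_cases hA : A S
    · rw [ind_pos hA, ind_neg (not_not.2 hA)]; norm_num
    · rw [ind_neg hA, ind_pos hA]; norm_num
  rw [h2, Ex_const] at h
  unfold Pr
  linarith

lemma Pr_exists {α ι : Type*} (F : Finset α) {p : ℝ} (h0 : 0 ≤ p) (h1 : p ≤ 1)
    (I : Finset ι) (A : ι → Finset α → Prop) :
    Pr F p (fun S => ∃ i ∈ I, A i S) ≤ ∑ i ∈ I, Pr F p (A i) := by
  unfold Pr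
  rw [← Ex_sum]
  apply Ex_mono F h0 h1
  intro S _
  by_cases h : ∃ i ∈ I, A i S
  · rw [ind_pos h]
    obtain ⟨i, hi, hA⟩ := h
    have : ind (A i S) ≤ ∑ i ∈ I, ind (A i S) :=
      Finset.single_le_sum (f := fun i => ind (A i S)) (fun j _ => ind_nonneg _) hi
    rwa [ind_pos hA] at this
  · rw [ind_neg h]
    exact Finset.sum_nonneg (fun j _ => ind_nonneg _)

lemma Pr_or {α : Type*} (F : Finset α) {p : ℝ} (h0 : 0 ≤ p) (h1 : p ≤ 1)
    (A B : Finset α → Prop) :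
    Pr F p (fun S => A S ∨ B S) ≤ Pr F p A + Pr F p B := by
  unfold Pr
  rw [← Ex_add]
  apply Ex_mono F h0 h1
  intro S _
  by_cases hA : A S
  · rw [ind_pos hA, ind_pos (Or.inl hA)]; linarith [ind_nonneg (B S)]
  · rw [ind_neg hA, zero_add]; exact ind_mono (fun h => h.resolve_left hA)

/-- Prescribed present and absent elements. -/
lemma Pr_cylinder {α : Type*} [DecidableEq α] (F : Finset α) (p : ℝ) (D N : Finset α)
    (hD : D ⊆ F) (hN : N ⊆ F) (hDN : Disjoint D N) :
    Pr F p (fun S => (∀ e ∈ D, e ∈ S) ∧ ∀ e ∈ N, e ∉ S) = p ^ D.card * (1 - p) ^ N.card := by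
  have key : ∀ (F : Finset α),
      Ex F p (fun S => ind (∀ e ∈ F, (e ∈ D → e ∈ S) ∧ (e ∈ N → e ∉ S)))
        = p ^ (F ∩ D).card * (1 - p) ^ (F ∩ N).card := by
    intro F
    induction F using Finset.induction_on with
    | empty => simp [Ex_empty, ind]
    | insert e F he ih =>
      rw [Ex_insert _ _ he]
      have e1 : e ∉ N → Ex F p (fun S => ind (∀ x ∈ insert e F, (x ∈ D → x ∈ insert e S) ∧
          (x ∈ N → x ∉ insert e S))) =
          p ^ (F ∩ D).card * (1 - p) ^ (F ∩ N).card := by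
        intro hg
        rw [← ih]
        unfold Ex
        apply Finset.sum_congr rfl
        intro S hS
        congr 1
        apply ind_congr
        constructor
        · intro h x hx
          have := h x (Finset.mem_insert_of_mem hx)
          have hne : x ≠ e := fun h => he (h ▸ hx)
          simpa [hne] using this
        · intro h x hx
          rcases Finset.mem_insert.1 hx with rfl | hx
          · simp [hg]
          · have hne : x ≠ e := fun h => he (h ▸ hx)
            simpa [hne] using h x hx
      have e1' : e ∈ N → Ex F p (fun S => ind (∀ x ∈ insert e F, (x ∈ D → x ∈ insert e S) ∧
          (x ∈ N → x ∉ insert e S))) = 0 := by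
        intro hg
        unfold Ex
        apply Finset.sum_eq_zero
        intro S hS
        dsimp only
        rw [ind_neg, mul_zero]
        intro h
        exact (h e (Finset.mem_insert_self _ _)).2 hg (Finset.mem_insert_self _ _)
      have e2' : e ∈ D → Ex F p (fun S => ind (∀ x ∈ insert e F, (x ∈ D → x ∈ S) ∧
          (x ∈ N → x ∉ S))) = 0 := by
        intro hf
        unfold Ex
        apply Finset.sum_eq_zero
        intro S hS
        have : e ∉ S := fun h => he (Finset.mem_powerset.1 hS h)
        dsimp only
        rw [ind_neg, mul_zero]
        intro h
        exact this ((h e (Finset.mem_insert_self _ _)).1 hf)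
      have e2 : e ∉ D → Ex F p (fun S => ind (∀ x ∈ insert e F, (x ∈ D → x ∈ S) ∧
          (x ∈ N → x ∉ S))) = p ^ (F ∩ D).card * (1 - p) ^ (F ∩ N).card := by
        intro hf
        rw [← ih]
        unfold Ex
        apply Finset.sum_congr rfl
        intro S hS
        have heS : e ∉ S := fun h => he (Finset.mem_powerset.1 hS h)
        congr 1
        apply ind_congr
        constructor
        · intro h x hx
          exact h x (Finset.mem_insert_of_mem hx)
        · intro h x hx
          rcases Finset.mem_insert.1 hx with rfl | hx
          · simp [hf, heS]
          · exact h x hx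
      have n1 : e ∉ F ∩ D := by simp [he]
      have n2 : e ∉ F ∩ N := by simp [he]
      by_cases hf : e ∈ D <;> by_cases hg : e ∈ N
      · exact absurd hg (Finset.disjoint_left.1 hDN hf)
      · rw [e1 hg, e2' hf, Finset.insert_inter_of_mem hf, Finset.insert_inter_of_notMem hg,
          Finset.card_insert_of_notMem n1]; ring
      · rw [e1' hg, e2 hf, Finset.insert_inter_of_notMem hf, Finset.insert_inter_of_mem hg,
          Finset.card_insert_of_notMem n2]; ring
      · rw [e1 hg, e2 hf, Finset.insert_inter_of_notMem hf, Finset.insert_inter_of_notMem hg]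
        ring
  have := key F
  rw [Finset.inter_eq_right.2 hD, Finset.inter_eq_right.2 hN] at this
  rw [← this]
  unfold Pr Ex
  apply Finset.sum_congr rfl
  intro S hS
  congr 1
  apply ind_congr
  constructor
  · intro h x _
    exact ⟨h.1 x, h.2 x⟩
  · intro h
    exact ⟨fun x hx => (h x (hD hx)).1 hx, fun x hx => (h x (hN hx)).2 hx⟩

lemma Pr_avoid {α : Type*} [DecidableEq α] (F : Finset α) (p : ℝ) (N : Finset α)
    (hN : N ⊆ F) : Pr F p (fun S => ∀ e ∈ N, e ∉ S) = (1 - p) ^ N.card := by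
  have := Pr_cylinder F p ∅ N (by simp) hN (by simp)
  simpa using this

/-- Two-round exposure bound. -/
lemma Pr_two_round {α : Type*} [DecidableEq α] (F : Finset α) {a b p δ : ℝ}
    (ha0 : 0 ≤ a) (ha1 : a ≤ 1) (hb0 : 0 ≤ b) (hb1 : b ≤ 1)
    (hp : 1 - p = (1 - a) * (1 - b)) (A : Finset α → Prop) (Q : Finset α → Prop)
    (hδ : 0 ≤ δ)
    (h : ∀ S ⊆ F, Q S → Pr F b (fun T => ¬ A (S ∪ T)) ≤ δ) :
    Pr F p (fun S => ¬ A S) ≤ Pr F a (fun S => ¬ Q S) + δ := by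
  have e : Pr F p (fun S => ¬ A S) = Ex F a (fun S => Pr F b (fun T => ¬ A (S ∪ T))) := by
    unfold Pr; rw [Ex_union F a b p hp]
  rw [e]
  have : Pr F a (fun S => ¬ Q S) + δ =
      Ex F a (fun S => ind (¬ Q S) + δ) := by
    rw [Ex_add, Ex_const]; rfl
  rw [this]
  apply Ex_mono F ha0 ha1
  intro S hS
  by_cases hQ : Q S
  · rw [ind_neg (not_not.2 hQ), zero_add]; exact h S hS hQ
  · rw [ind_pos hQ]
    have h1 := Pr_compl F b (fun T => ¬ A (S ∪ T))
    have h2 := Pr_nonneg F hb0 hb1 (fun T => ¬ ¬ A (S ∪ T))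
    linarith

/-- The ground set of edges. -/
def edgeGround (n : ℕ) : Finset (Sym2 (Fin n)) := Finset.univ.filter (fun e => ¬ e.IsDiag)

lemma mem_edgeGround {n : ℕ} {u v : Fin n} : s(u, v) ∈ edgeGround n ↔ u ≠ v := by
  simp [edgeGround]

lemma card_edgeGround (n : ℕ) : (edgeGround n).card = n.choose 2 := by
  have := Sym2.card_subtype_not_diag (α := Fin n)
  rw [Fintype.card_subtype, Fintype.card_fin] at this
  rw [← this, edgeGround]

/-- The graph with the edges of `S`. -/
def gr {n : ℕ} (S : Finset (Sym2 (Fin n))) : SimpleGraph (Fin n) :=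
  SimpleGraph.fromEdgeSet (S : Set (Sym2 (Fin n)))

lemma gr_adj {n : ℕ} (S : Finset (Sym2 (Fin n))) (u v : Fin n) :
    (gr S).Adj u v ↔ s(u, v) ∈ S ∧ u ≠ v := by
  simp [gr]

lemma gnpProb_eq (n : ℕ) (p : ℝ) (A : SimpleGraph (Fin n) → Prop) :
    gnpProb n p A = Pr (edgeGround n) p (fun S => A (gr S)) := by
  unfold gnpProb Pr Ex
  refine Finset.sum_bij' (fun G _ => G.edgeSet.toFinset) (fun S _ => gr S) ?_ ?_ ?_ ?_ ?_
  · intro G _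
    rw [Finset.mem_powerset]
    intro e he
    have he' : e ∈ G.edgeSet := by simpa using he
    simpa [edgeGround] using G.not_isDiag_of_mem_edgeSet he'
  · intro S _; exact Finset.mem_univ _
  · intro G _
    ext u v
    rw [gr_adj]
    constructor
    · intro h; simpa using h.1
    · intro h; exact ⟨by simpa using h, h.ne⟩
  · intro S hS
    ext e
    induction e with
    | _ u v =>
      have : s(u, v) ∈ S → u ≠ v := fun h => mem_edgeGround.1 (Finset.mem_powerset.1 hS h)
      simp [gr_adj]
      exact this
  · intro G _
    have h1 : gr (G.edgeSet.toFinset) = G := by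
      ext u v
      rw [gr_adj]
      constructor
      · intro h; simpa using h.1
      · intro h; exact ⟨by simpa using h, h.ne⟩
    dsimp only
    rw [h1, Set.ncard_eq_toFinset_card', card_edgeGround]
    unfold ind
    split_ifs <;> simp
/-! ### Long paths by depth-first search -/

lemma dfs_state {V : Type*} [Fintype V] [DecidableEq V] (G : SimpleGraph V) (j : ℕ)
    (hj : j ≤ Fintype.card V) :
    ∃ (S T : Finset V) (L : List V), L.Nodup ∧ L.IsChain G.Adj ∧ Disjoint S T ∧
      (∀ x ∈ L, x ∉ S ∧ x ∉ T) ∧ (∀ x ∈ S, ∀ y ∈ T, ¬ G.Adj x y) ∧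
      S.card + L.length + T.card = Fintype.card V ∧ T.card + j = S.card + Fintype.card V := by
  induction j with
  | zero =>
    refine ⟨∅, Finset.univ, [], ?_⟩
    simp
  | succ j ih =>
    obtain ⟨S, T, L, h1, h2, h3, h4, h5, h6, h7⟩ := ih (by omega)
    have push : ∀ x ∈ T, (x :: L).IsChain G.Adj →
      ∃ (S T : Finset V) (L : List V), L.Nodup ∧ L.IsChain G.Adj ∧ Disjoint S T ∧
      (∀ x ∈ L, x ∉ S ∧ x ∉ T) ∧ (∀ x ∈ S, ∀ y ∈ T, ¬ G.Adj x y) ∧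
      S.card + L.length + T.card = Fintype.card V ∧
        T.card + (j + 1) = S.card + Fintype.card V := by
      intro x hx hc
      have hxL : x ∉ L := fun h => (h4 x h).2 hx
      refine ⟨S, T.erase x, x :: L, List.nodup_cons.2 ⟨hxL, h1⟩, hc,
        h3.mono_right (Finset.erase_subset _ _), ?_, ?_, ?_, ?_⟩
      · intro y hy
        rcases List.mem_cons.1 hy with rfl | hy
        · exact ⟨fun h => Finset.disjoint_left.1 h3 h hx, Finset.notMem_erase _ _⟩
        · exact ⟨(h4 y hy).1, fun h => (h4 y hy).2 (Finset.mem_of_mem_erase h)⟩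
      · intro a ha b hb
        exact h5 a ha b (Finset.mem_of_mem_erase hb)
      · have := Finset.card_erase_add_one hx
        simp only [List.length_cons]; omega
      · have := Finset.card_erase_add_one hx
        omega
    cases L with
    | nil =>
      have hT : T.Nonempty := by
        rw [← Finset.card_pos]
        simp at h6
        omega
      obtain ⟨x, hx⟩ := hT
      exact push x hx (by simp)
    | cons y L =>
      by_cases hy : ∃ x ∈ T, G.Adj x y
      · obtain ⟨x, hx, hxy⟩ := hy
        exact push x hx (List.isChain_cons_cons.2 ⟨hxy, h2⟩)
      · push Not at hy
        have hyS := (h4 y (by simp)).1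
        have hyT := (h4 y (by simp)).2
        refine ⟨insert y S, T, L, (List.nodup_cons.1 h1).2, h2.tail, ?_, ?_, ?_, ?_, ?_⟩
        · rw [Finset.disjoint_insert_left]; exact ⟨hyT, h3⟩
        · intro x hx
          refine ⟨?_, (h4 x (by simp [hx])).2⟩
          intro h
          rcases Finset.mem_insert.1 h with rfl | h
          · exact (List.nodup_cons.1 h1).1 hx
          · exact (h4 x (by simp [hx])).1 h
        · intro a ha b hb
          rcases Finset.mem_insert.1 ha with rfl | ha
          · intro h; exact hy b hb h.symm
          · exact h5 a ha b hb
        · rw [Finset.card_insert_of_notMem hyS]; simp at h6; omega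
        · rw [Finset.card_insert_of_notMem hyS]; omega

/-- `v 0, …, v (m-1)` is a path in `G`. -/
structure IsPathSeq {V : Type*} (G : SimpleGraph V) (m : ℕ) (v : ℕ → V) : Prop where
  inj : ∀ i j, i < m → j < m → v i = v j → i = j
  adj : ∀ i, i + 1 < m → G.Adj (v i) (v (i + 1))

lemma long_path {V : Type*} [Fintype V] [DecidableEq V] [Nonempty V] (G : SimpleGraph V) (k : ℕ)
    (hk : ∀ X Y : Finset V, Disjoint X Y → X.card = k + 1 → Y.card = k + 1 →
      ∃ x ∈ X, ∃ y ∈ Y, G.Adj x y) :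
    ∃ (m : ℕ) (v : ℕ → V), IsPathSeq G m v ∧ Fintype.card V ≤ m + 2 * k := by
  obtain ⟨S, T, L, h1, h2, h3, h4, h5, h6, h7⟩ := dfs_state G (Fintype.card V) le_rfl
  have hS : S.card ≤ k := by
    by_contra hlt
    obtain ⟨X, hX, hXc⟩ := Finset.exists_subset_card_eq (s := S) (n := k + 1) (by omega)
    obtain ⟨Y, hY, hYc⟩ := Finset.exists_subset_card_eq (s := T) (n := k + 1) (by omega)
    obtain ⟨x, hx, y, hy, hxy⟩ := hk X Y (h3.mono hX hY) hXc hYc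
    exact h5 x (hX hx) y (hY hy) hxy
  refine ⟨L.length, fun i => if h : i < L.length then L[i] else Classical.arbitrary V, ⟨?_, ?_⟩, by omega⟩
  · intro i j hi hj h
    simp only [hi, hj, dif_pos] at h
    exact (List.Nodup.getElem_inj_iff h1).1 h
  · intro i hi
    have hi' : i < L.length := by omega
    simp only [hi, hi', dif_pos]
    exact List.isChain_iff_getElem.1 h2 i hi
/-! ### Schedules -/

/-- In `t` rounds one can move every agent from `w` to `π w`, such that agents starting from
`a`, `b` with `M a b` get acquainted. -/
def Sched {V : Type*} (G : SimpleGraph V) (t : ℕ) (π : Equiv.Perm V) (M : V → V → Prop) : Prop :=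
  ∃ σ : ℕ → Equiv.Perm V, (∀ i < t, IsMatchingSwap G (σ i)) ∧
    (∀ w, positions σ t w = π w) ∧ ∀ a b, M a b → Acquainted G σ t a b

lemma Sched.AC_le {V : Type*} {G : SimpleGraph V} {t : ℕ} {π : Equiv.Perm V}
    {M : V → V → Prop} (h : Sched G t π M) (hM : ∀ a b, a ≠ b → M a b ∨ M b a) : AC G ≤ t := by
  obtain ⟨σ, h1, _, h3⟩ := h
  apply Nat.sInf_le
  refine ⟨σ, h1, ?_⟩
  intro a b hab
  rcases hM a b hab with h | h
  · exact h3 a b h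
  · obtain ⟨i, hi, hadj⟩ := h3 b a h
    exact ⟨i, hi, hadj.symm⟩

lemma Sched.comp {V : Type*} {G : SimpleGraph V} {t₁ t₂ : ℕ} {π₁ π₂ : Equiv.Perm V}
    {M₁ M₂ : V → V → Prop} (h₁ : Sched G t₁ π₁ M₁) (h₂ : Sched G t₂ π₂ M₂) :
    Sched G (t₁ + t₂) (π₂ * π₁) (fun a b => M₁ a b ∨ M₂ (π₁ a) (π₁ b)) := by
  obtain ⟨σ₁, a1, a2, a3⟩ := h₁
  obtain ⟨σ₂, b1, b2, b3⟩ := h₂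
  let σ : ℕ → Equiv.Perm V := fun i => if i < t₁ then σ₁ i else σ₂ (i - t₁)
  have p1 : ∀ i, i ≤ t₁ → positions σ i = positions σ₁ i := by
    intro i
    induction i with
    | zero => intro _; rfl
    | succ i ih =>
      intro hi
      have : σ i = σ₁ i := by simp only [σ]; rw [if_pos (by omega)]
      simp only [positions, this, ih (by omega)]
  have p2 : ∀ i, positions σ (t₁ + i) = positions σ₂ i ∘ positions σ₁ t₁ := by
    intro i
    induction i with
    | zero => simp only [Nat.add_zero, p1 t₁ le_rfl]; rfl
    | succ i ih =>
      have : σ (t₁ + i) = σ₂ i := by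
        simp only [σ]; rw [if_neg (by omega)]; congr 1; omega
      rw [← Nat.add_assoc]
      simp only [positions, this, ih]
      rfl
  refine ⟨σ, ?_, ?_, ?_⟩
  · intro i hi
    by_cases h : i < t₁
    · have : σ i = σ₁ i := by simp only [σ]; rw [if_pos h]
      rw [this]; exact a1 i h
    · have : σ i = σ₂ (i - t₁) := by simp only [σ]; rw [if_neg h]
      rw [this]; exact b1 _ (by omega)
  · intro w
    rw [p2, Function.comp_apply, b2, a2]; rfl
  · intro a b hab
    rcases hab with h | h
    · obtain ⟨i, hi, hadj⟩ := a3 a b h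
      exact ⟨i, by omega, by rw [p1 i hi]; exact hadj⟩
    · obtain ⟨i, hi, hadj⟩ := b3 _ _ h
      refine ⟨t₁ + i, by omega, ?_⟩
      rw [p2, Function.comp_apply, Function.comp_apply, a2, a2]
      exact hadj

lemma Sched.mono {V : Type*} {G : SimpleGraph V} {t : ℕ} {π π' : Equiv.Perm V}
    {M M' : V → V → Prop} (h : Sched G t π M) (hπ : π = π') (hM : ∀ a b, M' a b → M a b) :
    Sched G t π' M' := by
  obtain ⟨σ, h1, h2, h3⟩ := h
  exact ⟨σ, h1, hπ ▸ h2, fun a b hab => h3 a b (hM a b hab)⟩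

lemma Sched.zero {V : Type*} (G : SimpleGraph V) :
    Sched G 0 1 (fun a b => G.Adj a b) :=
  ⟨fun _ => 1, fun i hi => absurd hi (by omega), fun _ => rfl, fun _ _ h => ⟨0, le_rfl, h⟩⟩

lemma Sched.single {V : Type*} {G : SimpleGraph V} {s : Equiv.Perm V}
    (hs : IsMatchingSwap G s) :
    Sched G 1 s (fun a b => G.Adj (s a) (s b)) :=
  ⟨fun _ => s, fun _ _ => hs, fun _ => rfl, fun _ _ h => ⟨1, le_rfl, h⟩⟩

/-! ### Circulation along a path -/

/-- Round `t` of the odd-even circulation on path positions. -/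
def flipPos (m t x : ℕ) : ℕ := if (x + t) % 2 = 0 then (if x + 1 < m then x + 1 else x) else x - 1

lemma flipPos_lt {m t x : ℕ} (hx : x < m) : flipPos m t x < m := by
  unfold flipPos; split_ifs <;> omega

lemma flipPos_flipPos {m t x : ℕ} (hx : x < m) : flipPos m t (flipPos m t x) = x := by
  unfold flipPos; split_ifs <;> omega

/-- Folding the cycle of length `2m` onto the path of length `m`. -/
def foldPos (m y : ℕ) : ℕ := if y % (2 * m) < m then y % (2 * m) else 2 * m - 1 - y % (2 * m)

/-- Initial phase of the slot starting from position `x`. -/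
def phasePos (m x : ℕ) : ℕ := if x % 2 = 0 then x else 2 * m - 1 - x

/-- Position at time `t` of the slot starting at position `x`. -/
def slotPos (m x t : ℕ) : ℕ := foldPos m (phasePos m x + t)

lemma phasePos_even {m x : ℕ} (hx : x < m) : phasePos m x % 2 = 0 ∧ phasePos m x < 2 * m := by
  unfold phasePos; split_ifs <;> omega

lemma foldPos_lt {m y : ℕ} (hm : 0 < m) : foldPos m y < m := by
  have := Nat.mod_lt y (show 2 * m > 0 by omega)
  unfold foldPos; split_ifs <;> omega

lemma slotPos_lt {m x t : ℕ} (hx : x < m) : slotPos m x t < m := foldPos_lt (by omega)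

lemma slotPos_zero {m x : ℕ} (hx : x < m) : slotPos m x 0 = x := by
  have h := (phasePos_even hx).2
  unfold slotPos foldPos
  rw [Nat.add_zero, Nat.mod_eq_of_lt h]
  unfold phasePos
  split_ifs <;> omega

lemma slotPos_period {m x : ℕ} (hx : x < m) : slotPos m x (2 * m) = x := by
  have : slotPos m x (2 * m) = slotPos m x 0 := by
    unfold slotPos foldPos; simp
  rw [this, slotPos_zero hx]

lemma mod_succ_cases (N y : ℕ) (hN : 0 < N) :
    (y % N + 1 < N ∧ (y + 1) % N = y % N + 1) ∨ (y % N + 1 = N ∧ (y + 1) % N = 0) := by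
  have h := Nat.mod_lt y hN
  rw [Nat.add_mod_eq_ite]
  rcases Nat.lt_or_ge 1 N with h1 | h1
  · rw [Nat.mod_eq_of_lt h1]; split_ifs <;> omega
  · have : N = 1 := by omega
    subst this; right; simp [Nat.mod_one]

lemma slotPos_succ {m x t : ℕ} (hx : x < m) :
    slotPos m x (t + 1) = flipPos m t (slotPos m x t) := by
  have hc := (phasePos_even hx).1
  unfold slotPos
  generalize phasePos m x = c at hc
  rw [← Nat.add_assoc]
  have hpar : (c + t) % (2 * m) % 2 = t % 2 := by
    rw [Nat.mod_mul_right_mod]; omega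
  have hlt := Nat.mod_lt (c + t) (show 2 * m > 0 by omega)
  unfold foldPos flipPos
  rcases mod_succ_cases (2 * m) (c + t) (by omega) with ⟨h1, h2⟩ | ⟨h1, h2⟩
  · rw [h2]
    generalize (c + t) % (2 * m) = r at *
    split_ifs <;> omega
  · rw [h2]
    generalize (c + t) % (2 * m) = r at *
    split_ifs <;> omega

/-- Any slot is at any position at some time. -/
lemma slotPos_visit {m x y : ℕ} (hx : x < m) (hy : y < m) : ∃ t < 2 * m, slotPos m x t = y := by
  have hc := (phasePos_even hx).2
  unfold slotPos
  generalize phasePos m x = c at hc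
  by_cases h : c ≤ y
  · refine ⟨y - c, by omega, ?_⟩
    rw [show c + (y - c) = y by omega, foldPos, Nat.mod_eq_of_lt (by omega), if_pos hy]
  · refine ⟨2 * m + y - c, by omega, ?_⟩
    rw [show c + (2 * m + y - c) = y + 2 * m by omega, foldPos, Nat.add_mod_right,
      Nat.mod_eq_of_lt (by omega), if_pos hy]

lemma foldPos_reflect {m y z : ℕ} (hyz : y + z = 2 * m - 2) (h : y < z) :
    foldPos m z = foldPos m y + 1 ∧ foldPos m z < m := by
  unfold foldPos
  rw [Nat.mod_eq_of_lt (show y < 2 * m by omega), Nat.mod_eq_of_lt (show z < 2 * m by omega)]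
  constructor <;> split_ifs <;> omega

/-- Any two slots are at consecutive positions at some time. -/
lemma slotPos_meet {m x x' : ℕ} (hx : x < m) (hx' : x' < m) (hne : x ≠ x') :
    ∃ t ≤ 2 * m, slotPos m x t = slotPos m x' t + 1 ∨ slotPos m x' t = slotPos m x t + 1 := by
  have hc := phasePos_even hx
  have hc' := phasePos_even hx'
  have hcc : phasePos m x ≠ phasePos m x' := by
    unfold phasePos; split_ifs <;> omega
  unfold slotPos
  generalize phasePos m x = c at *
  generalize phasePos m x' = c' at *
  have fold_add : ∀ y, foldPos m (y + 2 * m) = foldPos m y := by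
    intro y; unfold foldPos; simp
  -- reduce to representatives
  have main : ∀ c c' : ℕ, c % 2 = 0 → c' % 2 = 0 → c' < 2 * m → c < c' →
      ∃ t ≤ 2 * m, foldPos m (c' + t) = foldPos m (c + t) + 1 ∨
        foldPos m (c + t) = foldPos m (c' + t) + 1 := by
    intro c c' h1 h2 h3 h4
    by_cases h : c + c' ≤ 2 * m - 2
    · refine ⟨(2 * m - 2 - c - c') / 2, by omega, Or.inl ?_⟩
      exact (foldPos_reflect (by omega) (by omega)).1
    · -- shift `c'` by one full turn
      refine ⟨(4 * m - 2 - c - c') / 2, by omega, Or.inr ?_⟩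
      have e : c' + (4 * m - 2 - c - c') / 2 =
          (c' + (4 * m - 2 - c - c') / 2 - 2 * m) + 2 * m := by omega
      rw [e, fold_add]
      exact (foldPos_reflect (by omega) (by omega)).1
  rcases Nat.lt_or_gt_of_ne hcc with h | h
  · obtain ⟨t, ht, h⟩ := main c c' hc.1 hc'.1 hc'.2 h
    exact ⟨t, ht, h.symm⟩
  · exact main c' c hc'.1 hc.1 hc.2 h

/-- Each slot visits each position at most twice per period. -/
lemma slotPos_count {m x y T : ℕ} (hx : x < m) (hT : T ≤ 2 * m) :
    ((Finset.range T).filter (fun t => slotPos m x t = y)).card ≤ 2 := by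
  have hinj : Set.InjOn (fun t => (phasePos m x + t) % (2 * m))
      ((Finset.range T).filter (fun t => slotPos m x t = y) : Finset ℕ) := by
    intro t ht t' ht' h
    have h1 : t < T := by simp at ht; exact ht.1
    have h2 : t' < T := by simp at ht'; exact ht'.1
    have h3 : t % (2 * m) = t' % (2 * m) := Nat.ModEq.add_left_cancel' _ h
    rwa [Nat.mod_eq_of_lt (by omega), Nat.mod_eq_of_lt (by omega)] at h3
  rw [← Finset.card_image_of_injOn hinj]
  refine le_trans (Finset.card_le_card (t := {y, 2 * m - 1 - y}) ?_) Finset.card_le_two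
  intro r hr
  simp only [Finset.mem_image, Finset.mem_filter, Finset.mem_range] at hr
  obtain ⟨t, ⟨_, h2⟩, rfl⟩ := hr
  have hlt := Nat.mod_lt (phasePos m x + t) (show 2 * m > 0 by omega)
  unfold slotPos foldPos at h2
  simp only [Finset.mem_insert, Finset.mem_singleton]
  generalize (phasePos m x + t) % (2 * m) = r at *
  split_ifs at h2 <;> omega
/-! ### Permutations for the circulation and for hair swaps -/

/-- Round `t` of the circulation as a map on vertices. -/
noncomputable def rotFun {V : Type*} (m : ℕ) (v : ℕ → V) (t : ℕ) (w : V) : V :=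
  if h : ∃ x, x < m ∧ v x = w then v (flipPos m t h.choose) else w

lemma rotFun_path {V : Type*} {m : ℕ} {v : ℕ → V}
    (hv : ∀ i j, i < m → j < m → v i = v j → i = j) (t : ℕ) {x : ℕ} (hx : x < m) :
    rotFun m v t (v x) = v (flipPos m t x) := by
  have h : ∃ y, y < m ∧ v y = v x := ⟨x, hx, rfl⟩
  unfold rotFun
  rw [dif_pos h]
  have := hv _ _ h.choose_spec.1 hx h.choose_spec.2
  rw [this]

lemma rotFun_off {V : Type*} {m : ℕ} {v : ℕ → V} (t : ℕ) {w : V}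
    (hw : ∀ x < m, v x ≠ w) : rotFun m v t w = w := by
  unfold rotFun
  rw [dif_neg]
  rintro ⟨x, hx, h⟩
  exact hw x hx h

lemma rotFun_involutive {V : Type*} {m : ℕ} {v : ℕ → V}
    (hv : ∀ i j, i < m → j < m → v i = v j → i = j) (t : ℕ) :
    Function.Involutive (rotFun m v t) := by
  intro w
  by_cases h : ∃ x, x < m ∧ v x = w
  · obtain ⟨x, hx, rfl⟩ := h
    rw [rotFun_path hv t hx, rotFun_path hv t (flipPos_lt hx), flipPos_flipPos hx]
  · push Not at h
    rw [rotFun_off t h, rotFun_off t h]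

/-- Configuration after `t` rounds of circulation. -/
noncomputable def circ {V : Type*} {m : ℕ} {v : ℕ → V}
    (hv : ∀ i j, i < m → j < m → v i = v j → i = j) : ℕ → Equiv.Perm V
  | 0 => 1
  | t + 1 => (rotFun_involutive hv t).toPerm * circ hv t

lemma circ_path {V : Type*} {m : ℕ} {v : ℕ → V}
    (hv : ∀ i j, i < m → j < m → v i = v j → i = j) (t : ℕ) {x : ℕ} (hx : x < m) :
    circ hv t (v x) = v (slotPos m x t) := by
  induction t with
  | zero => rw [slotPos_zero hx]; rfl
  | succ t ih =>
    rw [slotPos_succ hx]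
    change rotFun m v t (circ hv t (v x)) = _
    rw [ih, rotFun_path hv t (slotPos_lt hx)]

lemma circ_off {V : Type*} {m : ℕ} {v : ℕ → V}
    (hv : ∀ i j, i < m → j < m → v i = v j → i = j) (t : ℕ) {w : V}
    (hw : ∀ x < m, v x ≠ w) : circ hv t w = w := by
  induction t with
  | zero => rfl
  | succ t ih =>
    change rotFun m v t (circ hv t w) = _
    rw [ih, rotFun_off t hw]

lemma circ_period {V : Type*} {m : ℕ} {v : ℕ → V}
    (hv : ∀ i j, i < m → j < m → v i = v j → i = j) : circ hv (2 * m) = 1 := by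
  ext w
  by_cases h : ∃ x, x < m ∧ v x = w
  · obtain ⟨x, hx, rfl⟩ := h
    rw [circ_path hv _ hx, slotPos_period hx]; rfl
  · push Not at h
    rw [circ_off hv _ h]; rfl

lemma rot_matching {V : Type*} {G : SimpleGraph V} {m : ℕ} {v : ℕ → V}
    (hP : IsPathSeq G m v) (t : ℕ) :
    IsMatchingSwap G (rotFun_involutive hP.inj t).toPerm := by
  intro w
  change rotFun m v t w = w ∨ (G.Adj w (rotFun m v t w) ∧ rotFun m v t (rotFun m v t w) = w)
  by_cases h : ∃ x, x < m ∧ v x = w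
  · obtain ⟨x, hx, rfl⟩ := h
    rw [rotFun_involutive hP.inj t, rotFun_path hP.inj t hx]
    unfold flipPos
    split_ifs with h1 h2
    · exact Or.inr ⟨hP.adj x h2, rfl⟩
    · exact Or.inl rfl
    · rcases Nat.eq_zero_or_pos x with h0 | h0
      · subst h0; exact Or.inl rfl
      · right
        refine ⟨?_, rfl⟩
        have := hP.adj (x - 1) (by omega)
        rw [Nat.sub_add_cancel h0] at this
        exact this.symm
  · push Not at h
    exact Or.inl (rotFun_off t h)

lemma sched_circ {V : Type*} {G : SimpleGraph V} {m : ℕ} {v : ℕ → V}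
    (hP : IsPathSeq G m v) (T : ℕ) :
    Sched G T (circ hP.inj T)
      (fun a b => ∃ t ≤ T, G.Adj (circ hP.inj t a) (circ hP.inj t b)) := by
  induction T with
  | zero =>
    refine (Sched.zero G).mono rfl ?_
    rintro a b ⟨t, ht, h⟩
    have : t = 0 := by omega
    subst this
    exact h
  | succ T ih =>
    refine (ih.comp (Sched.single (rot_matching hP T))).mono rfl ?_
    rintro a b ⟨t, ht, h⟩
    rcases Nat.lt_or_ge T t with h1 | h1
    · have : t = T + 1 := by omega
      subst this
      exact Or.inr h
    · exact Or.inl ⟨t, h1, h⟩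

/-- Swap `u` with `s u` for all `u` with `Q u`. -/
noncomputable def swapFun {V : Type*} (Q : V → Prop) (s : V → V) (w : V) : V :=
  if Q w then s w else if h : ∃ u, Q u ∧ s u = w then h.choose else w

/-- Hypotheses under which `swapFun` is an involution. -/
structure SwapOK {V : Type*} (Q : V → Prop) (s : V → V) : Prop where
  inj : ∀ u u', Q u → Q u' → s u = s u' → u = u'
  out : ∀ u u', Q u → Q u' → s u ≠ u'

lemma SwapOK.mono {V : Type*} {Q Q' : V → Prop} {s : V → V} (h : SwapOK Q s)
    (hQ : ∀ u, Q' u → Q u) : SwapOK Q' s :=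
  ⟨fun u u' a b => h.inj u u' (hQ u a) (hQ u' b), fun u u' a b => h.out u u' (hQ u a) (hQ u' b)⟩

lemma swapFun_left {V : Type*} {Q : V → Prop} {s : V → V} {u : V} (hu : Q u) :
    swapFun Q s u = s u := if_pos hu

lemma swapFun_right {V : Type*} {Q : V → Prop} {s : V → V} (h : SwapOK Q s) {u : V} (hu : Q u) :
    swapFun Q s (s u) = u := by
  have h1 : ¬ Q (s u) := fun hq => h.out u _ hu hq rfl
  have h2 : ∃ u', Q u' ∧ s u' = s u := ⟨u, hu, rfl⟩
  unfold swapFun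
  rw [if_neg h1, dif_pos h2]
  exact h.inj _ _ h2.choose_spec.1 hu h2.choose_spec.2

lemma swapFun_off {V : Type*} {Q : V → Prop} {s : V → V} {w : V} (h1 : ¬ Q w)
    (h2 : ∀ u, Q u → s u ≠ w) : swapFun Q s w = w := by
  unfold swapFun
  rw [if_neg h1, dif_neg]
  rintro ⟨u, hu, h⟩
  exact h2 u hu h

lemma swap_cases {V : Type*} (Q : V → Prop) (s : V → V) (w : V) :
    Q w ∨ (∃ u, Q u ∧ w = s u) ∨ (¬ Q w ∧ ∀ u, Q u → s u ≠ w) := by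
  by_cases h1 : Q w
  · exact Or.inl h1
  · by_cases h2 : ∃ u, Q u ∧ s u = w
    · obtain ⟨u, hu, h⟩ := h2
      exact Or.inr (Or.inl ⟨u, hu, h.symm⟩)
    · push Not at h2
      exact Or.inr (Or.inr ⟨h1, h2⟩)

lemma swapFun_involutive {V : Type*} {Q : V → Prop} {s : V → V} (h : SwapOK Q s) :
    Function.Involutive (swapFun Q s) := by
  intro w
  rcases swap_cases Q s w with h1 | ⟨u, hu, rfl⟩ | ⟨h1, h2⟩
  · rw [swapFun_left h1, swapFun_right h h1]
  · rw [swapFun_right h hu, swapFun_left hu]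
  · rw [swapFun_off h1 h2, swapFun_off h1 h2]

/-- The swap as a permutation. -/
noncomputable def swapPerm {V : Type*} {Q : V → Prop} {s : V → V} (h : SwapOK Q s) :
    Equiv.Perm V := (swapFun_involutive h).toPerm

lemma swapPerm_left {V : Type*} {Q : V → Prop} {s : V → V} (h : SwapOK Q s) {u : V} (hu : Q u) :
    swapPerm h u = s u := swapFun_left hu

lemma swapPerm_right {V : Type*} {Q : V → Prop} {s : V → V} (h : SwapOK Q s) {u : V} (hu : Q u) :
    swapPerm h (s u) = u := swapFun_right h hu

lemma swapPerm_off {V : Type*} {Q : V → Prop} {s : V → V} (h : SwapOK Q s) {w : V}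
    (h1 : ¬ Q w) (h2 : ∀ u, Q u → s u ≠ w) : swapPerm h w = w := swapFun_off h1 h2

lemma swapPerm_matching {V : Type*} {G : SimpleGraph V} {Q : V → Prop} {s : V → V}
    (h : SwapOK Q s) (hadj : ∀ u, Q u → G.Adj u (s u)) : IsMatchingSwap G (swapPerm h) := by
  intro w
  rcases swap_cases Q s w with h1 | ⟨u, hu, rfl⟩ | ⟨h1, h2⟩
  · right
    rw [swapPerm_left h h1, swapPerm_right h h1]
    exact ⟨hadj w h1, rfl⟩
  · right
    rw [swapPerm_right h hu, swapPerm_left h hu]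
    exact ⟨(hadj u hu).symm, rfl⟩
  · exact Or.inl (swapPerm_off h h1 h2)

/-- Splitting a swap into two. -/
lemma swapPerm_split {V : Type*} {Q Q₁ Q₂ : V → Prop} {s : V → V} (h : SwapOK Q s)
    (h₁ : SwapOK Q₁ s) (h₂ : SwapOK Q₂ s) (hQ : ∀ u, Q u ↔ Q₁ u ∨ Q₂ u)
    (hd : ∀ u, Q₁ u → ¬ Q₂ u) : swapPerm h₂ * swapPerm h₁ = swapPerm h := by
  have q1 : ∀ u, Q₁ u → Q u := fun u hu => (hQ u).2 (Or.inl hu)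
  have q2 : ∀ u, Q₂ u → Q u := fun u hu => (hQ u).2 (Or.inr hu)
  ext w
  change swapPerm h₂ (swapPerm h₁ w) = swapPerm h w
  rcases swap_cases Q s w with hw | ⟨u, hu, rfl⟩ | ⟨n1, n2⟩
  · rw [swapPerm_left h hw]
    by_cases c1 : Q₁ w
    · rw [swapPerm_left h₁ c1]
      refine swapPerm_off h₂ (fun hq => h.out w _ hw (q2 _ hq) rfl) ?_
      intro u hu he
      have := h.inj u w (q2 _ hu) hw he
      subst this
      exact hd _ c1 hu
    · have c2 := ((hQ w).1 hw).resolve_left c1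
      rw [swapPerm_off h₁ c1 (fun u hu => h.out u w (q1 u hu) hw), swapPerm_left h₂ c2]
  · rw [swapPerm_right h hu]
    by_cases c1 : Q₁ u
    · rw [swapPerm_right h₁ c1]
      exact swapPerm_off h₂ (hd u c1) (fun u' hu' => h.out u' u (q2 _ hu') hu)
    · have c2 := ((hQ u).1 hu).resolve_left c1
      rw [swapPerm_off h₁ (fun hq => h.out u _ hu (q1 _ hq) rfl), swapPerm_right h₂ c2]
      intro u' hu' he
      have := h.inj u' u (q1 _ hu') hu he
      subst this
      exact c1 hu'
  · rw [swapPerm_off h n1 n2, swapPerm_off h₁ (fun hq => n1 (q1 _ hq)) (fun u hu => n2 u (q1 u hu)),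
      swapPerm_off h₂ (fun hq => n1 (q2 _ hq)) (fun u hu => n2 u (q2 u hu))]

/-- Full-period meeting block. -/
lemma sched_period {V : Type*} {G : SimpleGraph V} {m : ℕ} {v : ℕ → V}
    (hP : IsPathSeq G m v) (Q : V → Prop) (f : V → ℕ) (hf : ∀ u, Q u → f u < m)
    (hQ : ∀ u, Q u → ∀ x < m, v x ≠ u) (hadj : ∀ u, Q u → G.Adj u (v (f u))) :
    Sched G (2 * m) 1 (fun a b => (∃ x < m, ∃ y < m, a = v x ∧ b = v y ∧ a ≠ b) ∨
      (Q a ∧ ∃ y < m, b = v y) ∨ (Q b ∧ ∃ x < m, a = v x)) := by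
  have hair : ∀ u, Q u → ∀ y < m, ∃ t ≤ 2 * m,
      G.Adj (circ hP.inj t u) (circ hP.inj t (v y)) := by
    intro u hu y hy
    obtain ⟨t, ht, h⟩ := slotPos_visit hy (hf u hu)
    refine ⟨t, ht.le, ?_⟩
    rw [circ_off hP.inj t (hQ u hu), circ_path hP.inj t hy, h]
    exact hadj u hu
  refine (sched_circ hP (2 * m)).mono (circ_period hP.inj) ?_
  rintro a b (⟨x, hx, y, hy, rfl, rfl, hne⟩ | ⟨ha, y, hy, rfl⟩ | ⟨hb, x, hx, rfl⟩)
  · obtain ⟨t, ht, h⟩ := slotPos_meet hx hy (fun h => hne (by rw [h]))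
    refine ⟨t, ht, ?_⟩
    rw [circ_path hP.inj t hx, circ_path hP.inj t hy]
    have l1 : slotPos m x t < m := slotPos_lt hx
    have l2 : slotPos m y t < m := slotPos_lt hy
    rcases h with h | h
    · rw [h]; exact (hP.adj _ (by omega)).symm
    · rw [h]; exact hP.adj _ (by omega)
  · exact hair a ha y hy
  · obtain ⟨t, ht, h⟩ := hair b hb x hx
    exact ⟨t, ht, h.symm⟩

/-- Insertion block: any injective assignment of hairs to slots can be swapped in. -/
lemma sched_insert {V : Type*} {G : SimpleGraph V} {m : ℕ} {v : ℕ → V}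
    (hP : IsPathSeq G m v) (Q : V → Prop) (f s : V → ℕ) (hf : ∀ u, Q u → f u < m)
    (hQ : ∀ u, Q u → ∀ x < m, v x ≠ u) (hadj : ∀ u, Q u → G.Adj u (v (f u)))
    (hs : ∀ u, Q u → s u < m) (hok : SwapOK Q (fun u => v (s u))) :
    Sched G (4 * m) (swapPerm hok) (fun _ _ => False) := by
  have hτ : ∀ u, ∃ t, Q u → t < 2 * m ∧ slotPos m (s u) t = f u := by
    intro u
    by_cases hu : Q u
    · obtain ⟨t, ht, h⟩ := slotPos_visit (hs u hu) (hf u hu)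
      exact ⟨t, fun _ => ⟨ht, h⟩⟩
    · exact ⟨0, fun h => absurd h hu⟩
  choose τ hτ using hτ
  have okJ : ∀ t, SwapOK (fun u => Q u ∧ τ u < t) (fun u => v (s u)) :=
    fun t => hok.mono (fun u h => h.1)
  have okK : ∀ t, SwapOK (fun u => Q u ∧ τ u = t) (fun u => v (s u)) :=
    fun t => hok.mono (fun u h => h.1)
  have okH : ∀ t, SwapOK (fun u => Q u ∧ τ u = t) (fun u => v (f u)) := by
    intro t
    constructor
    · rintro u u' ⟨hu, h1⟩ ⟨hu', h2⟩ he
      have e := hP.inj _ _ (hf u hu) (hf u' hu') he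
      have a1 := (hτ u hu).2
      have a2 := (hτ u' hu').2
      rw [h1] at a1
      rw [h2] at a2
      have : circ hP.inj t (v (s u)) = circ hP.inj t (v (s u')) := by
        rw [circ_path hP.inj t (hs u hu), circ_path hP.inj t (hs u' hu'), a1, a2, e]
      exact hok.inj u u' hu hu' ((circ hP.inj t).injective this)
    · rintro u u' ⟨hu, h1⟩ ⟨hu', h2⟩
      exact hQ u' hu' _ (hf u hu)
  have conj : ∀ t, swapPerm (okH t) * circ hP.inj t = circ hP.inj t * swapPerm (okK t) := by
    intro t
    ext w
    change swapPerm (okH t) (circ hP.inj t w) = circ hP.inj t (swapPerm (okK t) w)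
    have at_time : ∀ u, Q u → τ u = t → circ hP.inj t (v (s u)) = v (f u) := by
      intro u hu h
      rw [circ_path hP.inj t (hs u hu), ← (hτ u hu).2, h]
    rcases swap_cases (fun u => Q u ∧ τ u = t) (fun u => v (s u)) w with
      hw | ⟨u, hu, rfl⟩ | ⟨n1, n2⟩
    · rw [swapPerm_left (okK t) hw, at_time w hw.1 hw.2, circ_off hP.inj t (hQ w hw.1)]
      exact swapPerm_left (okH t) hw
    · rw [swapPerm_right (okK t) hu]
      rw [at_time u hu.1 hu.2, circ_off hP.inj t (hQ u hu.1)]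
      exact swapPerm_right (okH t) hu
    · rw [swapPerm_off (okK t) n1 n2]
      refine swapPerm_off (okH t) ?_ ?_
      · rintro ⟨h1, h2⟩
        have e : circ hP.inj t (circ hP.inj t w) = circ hP.inj t w :=
          circ_off hP.inj t (hQ _ h1)
        have e' := (circ hP.inj t).injective e
        rw [e'] at h1 h2
        exact n1 ⟨h1, h2⟩
      · rintro u hu he
        rw [← at_time u hu.1 hu.2] at he
        exact n2 u hu ((circ hP.inj t).injective he)
  have main : ∀ t, Sched G (2 * t) (circ hP.inj t * swapPerm (okJ t)) (fun _ _ => False) := by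
    intro t
    induction t with
    | zero =>
      refine (Sched.zero G).mono ?_ (fun _ _ h => h.elim)
      ext w
      change w = swapPerm (okJ 0) w
      rw [swapPerm_off]
      · rintro ⟨_, h⟩; omega
      · rintro u ⟨_, h⟩; omega
    | succ t ih =>
      have hm : IsMatchingSwap G (swapPerm (okH t)) :=
        swapPerm_matching (okH t) (fun u hu => hadj u hu.1)
      have := (ih.comp (Sched.single hm)).comp (Sched.single (rot_matching hP t))
      refine Sched.mono (t := 2 * (t + 1)) this ?_ (fun _ _ h => h.elim)
      have sp : swapPerm (okK t) * swapPerm (okJ t) = swapPerm (okJ (t + 1)) := by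
        refine swapPerm_split _ _ _ ?_ ?_
        · intro u
          constructor
          · rintro ⟨h1, h2⟩
            rcases Nat.lt_or_ge (τ u) t with h | h
            · exact Or.inl ⟨h1, h⟩
            · exact Or.inr ⟨h1, by omega⟩
          · rintro (⟨h1, h2⟩ | ⟨h1, h2⟩)
            · exact ⟨h1, by omega⟩
            · exact ⟨h1, by omega⟩
        · rintro u ⟨_, h⟩ ⟨_, h'⟩
          omega
      rw [← sp]
      change _ = (rotFun_involutive hP.inj t).toPerm * circ hP.inj t * _
      rw [mul_assoc, ← mul_assoc (circ hP.inj t), ← conj, mul_assoc]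
  have := main (2 * m)
  rw [show 2 * (2 * m) = 4 * m by ring] at this
  refine this.mono ?_ (fun _ _ h => h)
  rw [circ_period, one_mul]
  ext w
  rcases swap_cases Q (fun u => v (s u)) w with hw | ⟨u, hu, rfl⟩ | ⟨n1, n2⟩
  · rw [swapPerm_left hok hw, swapPerm_left _ ⟨hw, (hτ w hw).1⟩]
  · rw [swapPerm_right hok hu]
    exact swapPerm_right (okJ _) ⟨hu, (hτ u hu).1⟩
  · rw [swapPerm_off hok n1 n2]
    exact swapPerm_off _ (fun h => n1 h.1) (fun u hu => n2 u hu.1)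

/-! ### Deterministic strategies -/

lemma path_reach {V : Type*} {G : SimpleGraph V} {m : ℕ} {v : ℕ → V}
    (hP : IsPathSeq G m v) : ∀ x < m, G.Reachable (v x) (v 0) := by
  intro x
  induction x with
  | zero => intro _; exact SimpleGraph.Reachable.refl _
  | succ x ih =>
    intro hx
    exact (hP.adj x hx).symm.reachable.trans (ih (by omega))

lemma connected_of_path {V : Type*} {G : SimpleGraph V} {v : ℕ → V}
    (h : ∀ u, G.Reachable u (v 0)) : G.Connected := by
  have : Nonempty V := ⟨v 0⟩
  exact ⟨fun a b => (h a).trans (h b).symm⟩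

lemma trace_meet {a1 a2 a3 a4 a5 b1 b2 b3 b4 b5 c1 c2 c3 c5 d1 d2 d3 d5 : Prop}
    (Ta : (a1 ∧ a2 ∧ a3 ∧ a4 ∧ a5) ∨ (a1 ∧ c2 ∧ c3 ∧ a4 ∧ a5) ∨ (a1 ∧ c2 ∧ c5) ∨
      (a1 ∧ a2 ∧ a3) ∨ (c1 ∧ a2 ∧ a3 ∧ a4 ∧ a5) ∨ (c3 ∧ a4 ∧ a5))
    (Tb : (b1 ∧ b2 ∧ b3 ∧ b4 ∧ b5) ∨ (b1 ∧ d2 ∧ d3 ∧ b4 ∧ b5) ∨ (b1 ∧ d2 ∧ d5) ∨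
      (b1 ∧ b2 ∧ b3) ∨ (d1 ∧ b2 ∧ b3 ∧ b4 ∧ b5) ∨ (d3 ∧ b4 ∧ b5)) :
    ((a1 ∧ b1) ∨ (c1 ∧ b1) ∨ (a1 ∧ d1)) ∨ ((a2 ∧ b2) ∨ (c2 ∧ b2) ∨ (a2 ∧ d2)) ∨
    ((a3 ∧ b3) ∨ (c3 ∧ b3) ∨ (a3 ∧ d3)) ∨ (a4 ∧ b4) ∨
    ((a5 ∧ b5) ∨ (c5 ∧ b5) ∨ (a5 ∧ d5)) := by
  rcases Ta with ⟨h1, h2, h3, h4, h5⟩ | ⟨h1, h2, h3, h4, h5⟩ | ⟨h1, h2, h3⟩ | ⟨h1, h2, h3⟩ |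
    ⟨h1, h2, h3, h4, h5⟩ | ⟨h1, h2, h3⟩ <;>
  rcases Tb with ⟨k1, k2, k3, k4, k5⟩ | ⟨k1, k2, k3, k4, k5⟩ | ⟨k1, k2, k3⟩ | ⟨k1, k2, k3⟩ |
    ⟨k1, k2, k3, k4, k5⟩ | ⟨k1, k2, k3⟩ <;>
  simp only [*, true_and, and_true, true_or, or_true]

/-- The sparse strategy. -/
lemma case_sparse {V : Type*} {G : SimpleGraph V} {m : ℕ} {v : ℕ → V}
    (hP : IsPathSeq G m v) (Q W : V → Prop) (f s s' : V → ℕ) (g : V → V)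
    (hcov : ∀ u, (∃ x < m, v x = u) ∨ Q u ∨ W u)
    (hf : ∀ u, Q u → f u < m)
    (hQ : ∀ u, Q u → ∀ x < m, v x ≠ u) (hW : ∀ u, W u → ∀ x < m, v x ≠ u)
    (hQW : ∀ u, Q u → ¬ W u)
    (hadj : ∀ u, Q u → G.Adj u (v (f u)))
    (hg : ∀ w, W w → Q (g w)) (ginj : ∀ w w', W w → W w' → g w = g w' → w = w')
    (gadj : ∀ w, W w → G.Adj w (g w))
    (hs : ∀ u, Q u → s u < m) (hs' : ∀ u, Q u → s' u < m)
    (si : ∀ u u', Q u → Q u' → s u = s u' → u = u')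
    (si' : ∀ u u', Q u → Q u' → s' u = s' u' → u = u')
    (sd : ∀ u u', Q u → Q u' → s u ≠ s' u') :
    G.Connected ∧ AC G ≤ 18 * m + 2 := by
  constructor
  · have hq : ∀ u, Q u → G.Reachable u (v 0) := fun u hu =>
      (hadj u hu).reachable.trans (path_reach hP _ (hf u hu))
    apply connected_of_path (v := v)
    intro u
    rcases hcov u with ⟨x, hx, rfl⟩ | h | h
    · exact path_reach hP x hx
    · exact hq u h
    · exact (gadj u h).reachable.trans (hq _ (hg u h))
  have ok : SwapOK Q (fun u => v (s u)) :=
    ⟨fun u u' hu hu' h => si u u' hu hu' (hP.inj _ _ (hs u hu) (hs u' hu') h),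
      fun u u' hu hu' h => hQ u' hu' _ (hs u hu) h⟩
  have ok' : SwapOK Q (fun u => v (s' u)) :=
    ⟨fun u u' hu hu' h => si' u u' hu hu' (hP.inj _ _ (hs' u hu) (hs' u' hu') h),
      fun u u' hu hu' h => hQ u' hu' _ (hs' u hu) h⟩
  have okg : SwapOK W g := ⟨ginj, fun u u' hu hu' h => hQW _ (hg u hu) (h ▸ hu')⟩
  have R := sched_period hP Q f hf hQ hadj
  have I1 := sched_insert hP Q f s hf hQ hadj hs ok
  have I2 := sched_insert hP Q f s' hf hQ hadj hs' ok'
  have S := Sched.single (swapPerm_matching okg gadj)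
  set σ := swapPerm ok with hσ
  set σ' := swapPerm ok' with hσ'
  set γ := swapPerm okg with hγ
  let p : V → Prop := fun a => ∃ x < m, a = v x
  have R' : Sched G (2 * m) 1 (fun a b => a ≠ b ∧ ((p a ∧ p b) ∨ (Q a ∧ p b) ∨ (p a ∧ Q b))) := by
    refine R.mono rfl ?_
    rintro a b ⟨hab, ⟨⟨x, hx, rfl⟩, ⟨y, hy, rfl⟩⟩ | ⟨h1, h2⟩ | ⟨h1, h2⟩⟩
    · exact Or.inl ⟨x, hx, y, hy, rfl, rfl, hab⟩
    · exact Or.inr (Or.inl ⟨h1, h2⟩)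
    · exact Or.inr (Or.inr ⟨h2, h1⟩)
  clear R
  -- basic action facts
  have pσ : ∀ x < m, (∀ u, Q u → s u ≠ x) → σ (v x) = v x := fun x hx h =>
    swapPerm_off ok (fun hq => hQ _ hq x hx rfl)
      (fun u hu he => h u hu (hP.inj _ _ (hs u hu) hx he))
  have pσ' : ∀ x < m, (∀ u, Q u → s' u ≠ x) → σ' (v x) = v x := fun x hx h =>
    swapPerm_off ok' (fun hq => hQ _ hq x hx rfl)
      (fun u hu he => h u hu (hP.inj _ _ (hs' u hu) hx he))
  have pγ : ∀ x < m, γ (v x) = v x := fun x hx =>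
    swapPerm_off okg (fun hq => hW _ hq x hx rfl) (fun u hu he => hQ _ (hg u hu) x hx he.symm)
  have wσ : ∀ w, W w → σ w = w := fun w hw =>
    swapPerm_off ok (fun hq => hQW _ hq hw) (fun u hu he => hW _ hw _ (hs u hu) he)
  have wσ' : ∀ w, W w → σ' w = w := fun w hw =>
    swapPerm_off ok' (fun hq => hQW _ hq hw) (fun u hu he => hW _ hw _ (hs' u hu) he)
  have qσ : ∀ u, Q u → σ u = v (s u) := fun u hu => swapPerm_left ok hu
  have qσ' : ∀ u, Q u → σ' u = v (s' u) := fun u hu => swapPerm_left ok' hu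
  have eσ : ∀ u, Q u → σ (v (s u)) = u := fun u hu => swapPerm_right ok hu
  have eσ' : ∀ u, Q u → σ' (v (s' u)) = u := fun u hu => swapPerm_right ok' hu
  have wγ : ∀ w, W w → γ w = g w := fun w hw => swapPerm_left okg hw
  have gγ : ∀ w, W w → γ (g w) = w := fun w hw => swapPerm_right okg hw
  have nγ : ∀ u, Q u → (∀ w, W w → g w ≠ u) → γ u = u := fun u hu h =>
    swapPerm_off okg (hQW u hu) h
  have T : ∀ a, (p a ∧ p (σ a) ∧ p (γ (σ a)) ∧ p (σ' (γ (σ a))) ∧ p (γ (σ' (γ (σ a))))) ∨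
      (p a ∧ Q (σ a) ∧ Q (γ (σ a)) ∧ p (σ' (γ (σ a))) ∧ p (γ (σ' (γ (σ a))))) ∨
      (p a ∧ Q (σ a) ∧ Q (γ (σ' (γ (σ a))))) ∨
      (p a ∧ p (σ a) ∧ p (γ (σ a))) ∨
      (Q a ∧ p (σ a) ∧ p (γ (σ a)) ∧ p (σ' (γ (σ a))) ∧ p (γ (σ' (γ (σ a))))) ∨
      (Q (γ (σ a)) ∧ p (σ' (γ (σ a))) ∧ p (γ (σ' (γ (σ a))))) := by
    intro a
    rcases hcov a with ⟨x, hx, rfl⟩ | h | h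
    · by_cases h1 : ∃ u, Q u ∧ s u = x
      · obtain ⟨u, hu, rfl⟩ := h1
        rw [eσ u hu]
        by_cases h2 : ∃ w, W w ∧ g w = u
        · obtain ⟨w, hw, rfl⟩ := h2
          rw [gγ w hw, wσ' w hw, wγ w hw]
          exact Or.inr (Or.inr (Or.inl ⟨⟨_, hx, rfl⟩, hu, hu⟩))
        · push Not at h2
          rw [nγ u hu h2, qσ' u hu, pγ _ (hs' u hu)]
          have : p (v (s' u)) := ⟨_, hs' u hu, rfl⟩
          exact Or.inr (Or.inl ⟨⟨_, hx, rfl⟩, hu, hu, this, this⟩)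
      · push Not at h1
        have px : p (v x) := ⟨x, hx, rfl⟩
        rw [pσ x hx h1, pγ x hx]
        by_cases h2 : ∃ u, Q u ∧ s' u = x
        · exact Or.inr (Or.inr (Or.inr (Or.inl ⟨px, px, px⟩)))
        · push Not at h2
          rw [pσ' x hx h2, pγ x hx]
          exact Or.inl ⟨px, px, px, px, px⟩
    · rw [qσ a h, pγ _ (hs a h), pσ' _ (hs a h) (fun u hu he => sd a u h hu he.symm),
        pγ _ (hs a h)]
      have : p (v (s a)) := ⟨_, hs a h, rfl⟩
      exact Or.inr (Or.inr (Or.inr (Or.inr (Or.inl ⟨h, this, this, this, this⟩))))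
    · rw [wσ a h, wγ a h, qσ' _ (hg a h), pγ _ (hs' _ (hg a h))]
      have : p (v (s' (g a))) := ⟨_, hs' _ (hg a h), rfl⟩
      exact Or.inr (Or.inr (Or.inr (Or.inr (Or.inr ⟨hg a h, this, this⟩))))
  have big := (((((((R'.comp I1).comp R').comp S).comp R').comp I2).comp R').comp S).comp R'
  have : 2 * m + 4 * m + 2 * m + 1 + 2 * m + 4 * m + 2 * m + 1 + 2 * m = 18 * m + 2 := by ring
  rw [this] at big
  refine big.AC_le ?_
  intro a b hab
  left
  have h1 : σ a ≠ σ b := fun h => hab (σ.injective h)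
  have h2 : γ (σ a) ≠ γ (σ b) := fun h => h1 (γ.injective h)
  have h3 : σ' (γ (σ a)) ≠ σ' (γ (σ b)) := fun h => h2 (σ'.injective h)
  have h4 : γ (σ' (γ (σ a))) ≠ γ (σ' (γ (σ b))) := fun h => h3 (γ.injective h)
  have Ta := T a
  have Tb := T b
  simp only [Equiv.Perm.mul_apply, Equiv.Perm.one_apply]
  clear T big R' I1 I2 S
  clear_value σ σ' γ p
  have key := trace_meet Ta Tb
  rcases key with h | h | h | h | h
  · exact Or.inl (Or.inl (Or.inl (Or.inl (Or.inl (Or.inl (Or.inl (Or.inl ⟨hab, h⟩)))))))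
  · exact Or.inl (Or.inl (Or.inl (Or.inl (Or.inl (Or.inl (Or.inr ⟨h1, h⟩))))))
  · exact Or.inl (Or.inl (Or.inl (Or.inl (Or.inr ⟨h2, h⟩))))
  · exact Or.inl (Or.inl (Or.inr ⟨h3, Or.inl h⟩))
  · exact Or.inr ⟨h4, h⟩

/-- The dense strategy. -/
lemma case_dense {V : Type*} {G : SimpleGraph V} {m : ℕ} {v : ℕ → V}
    (hP : IsPathSeq G m v) (Q : V → Prop) (f : V → ℕ) (T : ℕ)
    (hcov : ∀ u, (∃ x < m, v x = u) ∨ Q u)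
    (hf : ∀ u, Q u → f u < m) (finj : ∀ u u', Q u → Q u' → f u = f u' → u = u')
    (hQ : ∀ u, Q u → ∀ x < m, v x ≠ u)
    (hadj : ∀ u, Q u → G.Adj u (v (f u)))
    (hA : ∀ i < m, ∀ j < m, i ≠ j → ∃ t < T, G.Adj (v (slotPos m i t)) (v (slotPos m j t)))
    (hB : ∀ u, Q u → ∀ i < m, ∃ t < T, G.Adj u (v (slotPos m i t))) :
    G.Connected ∧ AC G ≤ 2 * T + 1 := by
  constructor
  · apply connected_of_path (v := v)
    intro u
    rcases hcov u with ⟨x, hx, rfl⟩ | h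
    · exact path_reach hP x hx
    · exact (hadj u h).reachable.trans (path_reach hP _ (hf u h))
  have ok : SwapOK Q (fun u => v (f u)) :=
    ⟨fun u u' hu hu' h => finj u u' hu hu' (hP.inj _ _ (hf u hu) (hf u' hu') h),
      fun u u' hu hu' h => hQ u' hu' _ (hf u hu) h⟩
  have big := ((sched_circ hP T).comp (Sched.single (swapPerm_matching ok hadj))).comp
    (sched_circ hP T)
  rw [show T + 1 + T = 2 * T + 1 by ring] at big
  refine big.AC_le ?_
  intro a b hab
  simp only [Equiv.Perm.mul_apply]
  rcases hcov a with ⟨x, hx, rfl⟩ | ha <;> rcases hcov b with ⟨y, hy, rfl⟩ | hb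
  · obtain ⟨t, ht, h⟩ := hA x hx y hy (fun h => hab (by rw [h]))
    left; left; left
    refine ⟨t, ht.le, ?_⟩
    rwa [circ_path hP.inj t hx, circ_path hP.inj t hy]
  · obtain ⟨t, ht, h⟩ := hB b hb x hx
    right; left; left
    refine ⟨t, ht.le, ?_⟩
    rwa [circ_path hP.inj t hx, circ_off hP.inj t (hQ b hb)]
  · obtain ⟨t, ht, h⟩ := hB a ha y hy
    left; left; left
    refine ⟨t, ht.le, ?_⟩
    rwa [circ_path hP.inj t hy, circ_off hP.inj t (hQ a ha)]
  · obtain ⟨t, ht, h⟩ := hA (f a) (hf a ha) (f b) (hf b hb) (fun h => hab (finj a b ha hb h))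
    left; right
    refine ⟨t, ht.le, ?_⟩
    rw [circ_off hP.inj T (hQ a ha), circ_off hP.inj T (hQ b hb), swapPerm_left ok ha,
      swapPerm_left ok hb]
    rwa [circ_path hP.inj t (hf a ha), circ_path hP.inj t (hf b hb)]

/-! ### Probability estimates -/

/-- The set of potential edges between `X` and `Y`. -/
def betw {n : ℕ} (X Y : Finset (Fin n)) : Finset (Sym2 (Fin n)) :=
  (X ×ˢ Y).image (fun q => s(q.1, q.2))

lemma mem_betw {n : ℕ} {X Y : Finset (Fin n)} {e : Sym2 (Fin n)} :
    e ∈ betw X Y ↔ ∃ x ∈ X, ∃ y ∈ Y, s(x, y) = e := by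
  unfold betw
  simp only [Finset.mem_image, Finset.mem_product, Prod.exists]
  constructor
  · rintro ⟨x, y, ⟨hx, hy⟩, h⟩; exact ⟨x, hx, y, hy, h⟩
  · rintro ⟨x, hx, y, hy, h⟩; exact ⟨x, y, ⟨hx, hy⟩, h⟩

lemma card_betw {n : ℕ} {X Y : Finset (Fin n)} (h : Disjoint X Y) :
    (betw X Y).card = X.card * Y.card := by
  unfold betw
  rw [Finset.card_image_of_injOn, Finset.card_product]
  rintro ⟨a, b⟩ hab ⟨c, d⟩ hcd he
  simp only [Finset.coe_product, Set.mem_prod, Finset.mem_coe] at hab hcd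
  simp only [Sym2.eq_iff] at he
  rcases he with ⟨h1, h2⟩ | ⟨h1, h2⟩
  · rw [h1, h2]
  · exact absurd (h1 ▸ hab.1) (fun hh => Finset.disjoint_left.1 h hh hcd.2)

lemma betw_subset {n : ℕ} {X Y : Finset (Fin n)} (h : Disjoint X Y) :
    betw X Y ⊆ edgeGround n := by
  intro e he
  obtain ⟨x, hx, y, hy, rfl⟩ := mem_betw.1 he
  rw [mem_edgeGround]
  rintro rfl
  exact Finset.disjoint_left.1 h hx hy

lemma Pr_betw {n : ℕ} (p : ℝ) {X Y : Finset (Fin n)} (h : Disjoint X Y) :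
    Pr (edgeGround n) p (fun S => ∀ e ∈ betw X Y, e ∉ S) = (1 - p) ^ (X.card * Y.card) := by
  rw [Pr_avoid _ _ _ (betw_subset h), card_betw h]

/-- Existence of an almost spanning path. -/
def PathEv {n : ℕ} (S : Finset (Sym2 (Fin n))) : Prop :=
  ∃ m v, IsPathSeq (gr S) m v ∧ n ≤ m + 2 * (n / 20)

lemma Pr_path {n : ℕ} (hn : 0 < n) {a : ℝ} (h0 : 0 ≤ a) (h1 : a ≤ 1) :
    Pr (edgeGround n) a (fun S => ¬ PathEv S) ≤ 4 ^ n * (1 - a) ^ ((n / 20 + 1) * (n / 20 + 1)) := by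
  set k := n / 20 with hk
  let I : Finset (Finset (Fin n) × Finset (Fin n)) :=
    Finset.univ.filter (fun q => Disjoint q.1 q.2 ∧ q.1.card = k + 1 ∧ q.2.card = k + 1)
  have step1 : Pr (edgeGround n) a (fun S => ¬ PathEv S) ≤
      Pr (edgeGround n) a (fun S => ∃ q ∈ I, ∀ e ∈ betw q.1 q.2, e ∉ S) := by
    apply Pr_mono _ h0 h1
    intro S _ hS
    by_contra hcon
    apply hS
    have : Nonempty (Fin n) := ⟨⟨0, hn⟩⟩
    obtain ⟨m, v, hv, hm⟩ := long_path (gr S) k (by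
      intro X Y hXY hX hY
      by_contra hno
      apply hcon
      refine ⟨(X, Y), by simp [I, hXY, hX, hY], ?_⟩
      intro e he heS
      obtain ⟨x, hx, y, hy, rfl⟩ := mem_betw.1 he
      apply hno
      refine ⟨x, hx, y, hy, ?_⟩
      rw [gr_adj]
      refine ⟨heS, ?_⟩
      rintro rfl
      exact Finset.disjoint_left.1 hXY hx hy)
    exact ⟨m, v, hv, by simpa using hm⟩
  refine step1.trans ((Pr_exists _ h0 h1 I _).trans ?_)
  have : ∀ q ∈ I, Pr (edgeGround n) a (fun S => ∀ e ∈ betw q.1 q.2, e ∉ S) ≤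
      (1 - a) ^ ((k + 1) * (k + 1)) := by
    intro q hq
    simp only [I, Finset.mem_filter, Finset.mem_univ, true_and] at hq
    rw [Pr_betw a hq.1, hq.2.1, hq.2.2]
  refine (Finset.sum_le_sum this).trans ?_
  rw [Finset.sum_const, nsmul_eq_mul]
  apply mul_le_mul_of_nonneg_right _ (pow_nonneg (by linarith) _)
  have h2 : I.card ≤ 4 ^ n := by
    refine (Finset.card_le_univ _).trans ?_
    rw [Fintype.card_prod, Fintype.card_finset, Fintype.card_fin, ← mul_pow]
    norm_num
  exact_mod_cast h2

/-- Vertices off the path. -/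
def offP {n : ℕ} (m : ℕ) (v : ℕ → Fin n) : Finset (Fin n) :=
  Finset.univ \ (Finset.range m).image v

/-- Vertices on the path. -/
def onP {n : ℕ} (m : ℕ) (v : ℕ → Fin n) : Finset (Fin n) := (Finset.range m).image v

lemma mem_onP {n m : ℕ} {v : ℕ → Fin n} {u : Fin n} : u ∈ onP m v ↔ ∃ x < m, v x = u := by
  simp [onP]

lemma mem_offP {n m : ℕ} {v : ℕ → Fin n} {u : Fin n} : u ∈ offP m v ↔ ∀ x < m, v x ≠ u := by
  simp [offP]

lemma not_mem_onP {n m : ℕ} {v : ℕ → Fin n} {u : Fin n} : u ∉ onP m v ↔ u ∈ offP m v := by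
  simp [offP, onP]

lemma card_onP {n m : ℕ} {v : ℕ → Fin n} (hv : ∀ i j, i < m → j < m → v i = v j → i = j) :
    (onP m v).card = m := by
  unfold onP
  rw [Finset.card_image_of_injOn, Finset.card_range]
  intro i hi j hj h
  simp only [Finset.coe_range, Set.mem_Iio] at hi hj
  exact hv i j hi hj h

lemma card_offP {n m : ℕ} {v : ℕ → Fin n} (hv : ∀ i j, i < m → j < m → v i = v j → i = j) :
    (offP m v).card + m = n := by
  have h := card_onP hv
  have : offP m v = Finset.univ \ onP m v := rfl
  have h2 := Finset.card_sdiff_add_card_eq_card (Finset.subset_univ (onP m v))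
  rw [← this, h, Finset.card_univ, Fintype.card_fin] at h2
  exact h2

/-- The cylinder bound: the edges of `D` lie off the path, and `w, w'` send nothing to the path. -/
lemma Pr_two_stubs {n m : ℕ} {v : ℕ → Fin n} (hv : ∀ i j, i < m → j < m → v i = v j → i = j)
    (b : ℝ) (D : Finset (Sym2 (Fin n))) (hD : D ⊆ edgeGround n)
    (hDo : ∀ e ∈ D, ∀ x ∈ e, x ∈ offP m v) {w w' : Fin n} (hw : w ∈ offP m v)
    (hw' : w' ∈ offP m v) (hne : w ≠ w') :
    Pr (edgeGround n) b (fun S => (∀ e ∈ D, e ∈ S) ∧ ∀ e ∈ betw {w, w'} (onP m v), e ∉ S) =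
      b ^ D.card * (1 - b) ^ (2 * m) := by
  have hdis : Disjoint ({w, w'} : Finset (Fin n)) (onP m v) := by
    rw [Finset.disjoint_left]
    intro x hx
    rw [not_mem_onP]
    simp only [Finset.mem_insert, Finset.mem_singleton] at hx
    rcases hx with rfl | rfl <;> assumption
  rw [Pr_cylinder _ _ _ _ hD (betw_subset hdis), card_betw hdis, card_onP hv,
    Finset.card_pair hne]
  rw [Finset.disjoint_left]
  intro e he he'
  obtain ⟨x, _, y, hy, rfl⟩ := mem_betw.1 he'
  exact not_mem_onP.2 (hDo _ he y (by simp)) hy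

lemma path_mono {V : Type*} {G H : SimpleGraph V} {m : ℕ} {v : ℕ → V} (hP : IsPathSeq G m v)
    (h : ∀ a b, G.Adj a b → H.Adj a b) : IsPathSeq H m v :=
  ⟨hP.inj, fun i hi => h _ _ (hP.adj i hi)⟩

lemma Pr_sparse {n m : ℕ} {v : ℕ → Fin n} {S : Finset (Sym2 (Fin n))}
    (hP : IsPathSeq (gr S) m v) (hm : n ≤ m + 2 * (n / 20)) {b : ℝ} (h0 : 0 ≤ b) (h1 : b ≤ 1) :
    Pr (edgeGround n) b (fun T => ¬ ((gr (S ∪ T)).Connected ∧ AC (gr (S ∪ T)) ≤ 18 * m + 2)) ≤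
      n * (1 - b) ^ (n - 1) + (n ^ 2 * (b * (1 - b) ^ (2 * m)) +
        n ^ 3 * (b ^ 2 * (1 - b) ^ (2 * m))) := by
  have hb : 0 ≤ 1 - b := by linarith
  let O := offP m v
  let B1 : Finset (Sym2 (Fin n)) → Prop := fun T => ∃ u ∈ (Finset.univ : Finset (Fin n)),
    ∀ e ∈ betw {u} (Finset.univ \ {u}), e ∉ T
  let I2 : Finset (Fin n × Fin n) := Finset.univ.filter
    (fun q => q.1 ∈ O ∧ q.2 ∈ O ∧ q.1 ≠ q.2)
  let B2 : Finset (Sym2 (Fin n)) → Prop := fun T => ∃ q ∈ I2,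
    (∀ e ∈ ({s(q.1, q.2)} : Finset (Sym2 (Fin n))), e ∈ T) ∧
      ∀ e ∈ betw {q.1, q.2} (onP m v), e ∉ T
  let I3 : Finset (Fin n × Fin n × Fin n) := Finset.univ.filter
    (fun q => q.1 ∈ O ∧ q.2.1 ∈ O ∧ q.2.2 ∈ O ∧ q.1 ≠ q.2.1 ∧ q.1 ≠ q.2.2 ∧ q.2.1 ≠ q.2.2)
  let B3 : Finset (Sym2 (Fin n)) → Prop := fun T => ∃ q ∈ I3,
    (∀ e ∈ ({s(q.1, q.2.2), s(q.2.1, q.2.2)} : Finset (Sym2 (Fin n))), e ∈ T) ∧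
      ∀ e ∈ betw {q.1, q.2.1} (onP m v), e ∉ T
  have b1 : Pr (edgeGround n) b B1 ≤ n * (1 - b) ^ (n - 1) := by
    refine (Pr_exists _ h0 h1 _ _).trans ?_
    rw [Finset.sum_congr rfl (g := fun _ => (1 - b) ^ (n - 1))]
    · simp
    · intro u _
      rw [Pr_betw b Finset.disjoint_sdiff]
      simp [Finset.card_sdiff]
  have b2 : Pr (edgeGround n) b B2 ≤ n ^ 2 * (b * (1 - b) ^ (2 * m)) := by
    refine (Pr_exists _ h0 h1 _ _).trans ?_
    have : ∀ q ∈ I2, Pr (edgeGround n) b (fun T =>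
        (∀ e ∈ ({s(q.1, q.2)} : Finset (Sym2 (Fin n))), e ∈ T) ∧
          ∀ e ∈ betw {q.1, q.2} (onP m v), e ∉ T) ≤ b * (1 - b) ^ (2 * m) := by
      rintro ⟨w, w'⟩ hq
      simp only [I2, Finset.mem_filter, Finset.mem_univ, true_and] at hq
      rw [Pr_two_stubs hP.inj b _ _ _ hq.1 hq.2.1 hq.2.2, Finset.card_singleton, pow_one]
      · intro e he
        rw [Finset.mem_singleton] at he
        rw [he, mem_edgeGround]; exact hq.2.2
      · intro e he x hx
        rw [Finset.mem_singleton] at he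
        rw [he, Sym2.mem_iff] at hx
        rcases hx with rfl | rfl
        · exact hq.1
        · exact hq.2.1
    refine (Finset.sum_le_sum this).trans ?_
    rw [Finset.sum_const, nsmul_eq_mul]
    apply mul_le_mul_of_nonneg_right _ (by positivity)
    have h2 : I2.card ≤ n ^ 2 := by
      refine (Finset.card_le_univ _).trans ?_
      simp [pow_two]
    exact_mod_cast h2
  have b3 : Pr (edgeGround n) b B3 ≤ n ^ 3 * (b ^ 2 * (1 - b) ^ (2 * m)) := by
    refine (Pr_exists _ h0 h1 _ _).trans ?_
    have : ∀ q ∈ I3, Pr (edgeGround n) b (fun T =>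
        (∀ e ∈ ({s(q.1, q.2.2), s(q.2.1, q.2.2)} : Finset (Sym2 (Fin n))), e ∈ T) ∧
          ∀ e ∈ betw {q.1, q.2.1} (onP m v), e ∉ T) ≤ b ^ 2 * (1 - b) ^ (2 * m) := by
      rintro ⟨w, w', y⟩ hq
      simp only [I3, Finset.mem_filter, Finset.mem_univ, true_and] at hq
      obtain ⟨q1, q2, q3, q4, q5, q6⟩ := hq
      rw [Pr_two_stubs hP.inj b _ _ _ q1 q2 q4, Finset.card_pair]
      · intro h
        rw [Sym2.eq_iff] at h
        rcases h with h | h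
        · exact q4 h.1
        · exact q5 h.1
      · intro e he
        simp only [Finset.mem_insert, Finset.mem_singleton] at he
        rcases he with rfl | rfl
        · rw [mem_edgeGround]; exact q5
        · rw [mem_edgeGround]; exact q6
      · intro e he x hx
        simp only [Finset.mem_insert, Finset.mem_singleton] at he
        rcases he with rfl | rfl <;> rw [Sym2.mem_iff] at hx <;> rcases hx with rfl | rfl <;>
          assumption
    refine (Finset.sum_le_sum this).trans ?_
    rw [Finset.sum_const, nsmul_eq_mul]
    apply mul_le_mul_of_nonneg_right _ (by positivity)
    have h2 : I3.card ≤ n ^ 3 := by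
      refine (Finset.card_le_univ _).trans ?_
      simp only [Fintype.card_prod, Fintype.card_fin]
      exact le_of_eq (by ring)
    exact_mod_cast h2
  have main : ∀ T ⊆ edgeGround n,
      ¬ ((gr (S ∪ T)).Connected ∧ AC (gr (S ∪ T)) ≤ 18 * m + 2) → B1 T ∨ (B2 T ∨ B3 T) := by
    intro T hT hbad
    by_contra hcon
    push Not at hcon
    obtain ⟨n1, n2, n3⟩ := hcon
    apply hbad
    have tadj : ∀ x y, s(x, y) ∈ T → (gr (S ∪ T)).Adj x y := by
      intro x y h
      rw [gr_adj]
      exact ⟨Finset.mem_union_right _ h, mem_edgeGround.1 (hT h)⟩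
    have hP' : IsPathSeq (gr (S ∪ T)) m v := path_mono hP (by
      intro x y h
      rw [gr_adj] at h ⊢
      exact ⟨Finset.mem_union_left _ h.1, h.2⟩)
    let Q : Fin n → Prop := fun u => u ∈ O ∧ ∃ x < m, s(u, v x) ∈ T
    let W : Fin n → Prop := fun u => u ∈ O ∧ ∀ x < m, s(u, v x) ∉ T
    have hnb : ∀ u, ∃ y, s(u, y) ∈ T := by
      intro u
      by_contra hno
      push Not at hno
      apply n1
      refine ⟨u, Finset.mem_univ _, ?_⟩
      intro e he
      obtain ⟨x, hx, y, _, rfl⟩ := mem_betw.1 he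
      rw [Finset.mem_singleton] at hx
      rw [hx]; exact hno y
    choose g hg using hnb
    have hbw : ∀ w w', W w → W w' → ∀ e ∈ betw {w, w'} (onP m v), e ∉ T := by
      intro w w' hw hw' e he
      obtain ⟨x, hx, y, hy, rfl⟩ := mem_betw.1 he
      obtain ⟨z, hz, rfl⟩ := mem_onP.1 hy
      simp only [Finset.mem_insert, Finset.mem_singleton] at hx
      rcases hx with rfl | rfl
      · exact hw.2 z hz
      · exact hw'.2 z hz
    have gO : ∀ w, W w → g w ∈ O := by
      intro w hw
      by_contra h
      obtain ⟨x, hx, he⟩ := mem_onP.1 (not_not.1 (fun hh => h (not_mem_onP.1 hh)))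
      exact hw.2 x hx (he ▸ hg w)
    have gne : ∀ w, w ≠ g w := fun w => mem_edgeGround.1 (hT (hg w))
    have gQ : ∀ w, W w → Q (g w) := by
      intro w hw
      refine ⟨gO w hw, ?_⟩
      by_contra hno
      push Not at hno
      apply n2
      refine ⟨(w, g w), ?_, ?_, hbw w (g w) hw ⟨gO w hw, hno⟩⟩
      · simp only [I2, Finset.mem_filter, Finset.mem_univ, true_and]
        exact ⟨hw.1, gO w hw, gne w⟩
      · intro e he
        rw [Finset.mem_singleton] at he
        rw [he]; exact hg w
    have ginj : ∀ w w', W w → W w' → g w = g w' → w = w' := by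
      intro w w' hw hw' he
      by_contra hne
      apply n3
      refine ⟨(w, w', g w), ?_, ?_, hbw w w' hw hw'⟩
      · simp only [I3, Finset.mem_filter, Finset.mem_univ, true_and]
        exact ⟨hw.1, hw'.1, gO w hw, hne, gne w, he ▸ gne w'⟩
      · intro e hee
        simp only [Finset.mem_insert, Finset.mem_singleton] at hee
        rcases hee with rfl | rfl
        · exact hg w
        · rw [he]; exact hg w'
    have hfex : ∀ u, ∃ x, Q u → x < m ∧ s(u, v x) ∈ T := by
      intro u
      by_cases hu : Q u
      · obtain ⟨_, x, hx⟩ := hu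
        exact ⟨x, fun _ => hx⟩
      · exact ⟨0, fun h => absurd h hu⟩
    choose f hf using hfex
    have hOc : O.card + m = n := card_offP hP.inj
    let s : Fin n → ℕ := fun u => if h : u ∈ O then (O.equivFin ⟨u, h⟩).val else 0
    have slt : ∀ u, u ∈ O → s u < O.card := by
      intro u hu
      simp only [s, dif_pos hu]
      exact (O.equivFin ⟨u, hu⟩).isLt
    have sinj : ∀ u u', u ∈ O → u' ∈ O → s u = s u' → u = u' := by
      intro u u' hu hu' h
      simp only [s, dif_pos hu, dif_pos hu'] at h
      have := O.equivFin.injective (Fin.ext h)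
      simpa using this
    refine case_sparse hP' Q W f s (fun u => O.card + s u) g ?_ ?_ ?_ ?_ ?_ ?_ gQ ginj
      (fun w _ => tadj _ _ (hg w)) ?_ ?_ ?_ ?_ ?_
    · intro u
      by_cases h : u ∈ onP m v
      · exact Or.inl (mem_onP.1 h)
      · right
        have hu : u ∈ O := not_mem_onP.1 h
        by_cases h2 : ∃ x < m, s(u, v x) ∈ T
        · exact Or.inl ⟨hu, h2⟩
        · push Not at h2
          exact Or.inr ⟨hu, h2⟩
    · intro u hu; exact (hf u hu).1
    · intro u hu; exact mem_offP.1 hu.1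
    · intro u hu; exact mem_offP.1 hu.1
    · rintro u ⟨_, x, hx, h⟩ ⟨_, h2⟩
      exact h2 x hx h
    · intro u hu; exact tadj _ _ (hf u hu).2
    · intro u hu; have := slt u hu.1; omega
    · intro u hu; have := slt u hu.1; omega
    · intro u u' hu hu'; exact sinj u u' hu.1 hu'.1
    · intro u u' hu hu' h; exact sinj u u' hu.1 hu'.1 (by omega)
    · intro u u' hu hu' h; have := slt u hu.1; omega
  refine (Pr_mono _ h0 h1 main).trans ((Pr_or _ h0 h1 _ _).trans (add_le_add b1 ?_))
  exact (Pr_or _ h0 h1 _ _).trans (add_le_add b2 b3)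

lemma slotPos_inj {n m : ℕ} {v : ℕ → Fin n} (hv : ∀ i j, i < m → j < m → v i = v j → i = j)
    {i j t : ℕ} (hi : i < m) (hj : j < m) (hij : i ≠ j) :
    v (slotPos m i t) ≠ v (slotPos m j t) := by
  intro h
  rw [← circ_path hv t hi, ← circ_path hv t hj] at h
  exact hij (hv i j hi hj ((circ hv t).injective h))

lemma Pr_image {n k : ℕ} {b : ℝ} (h0 : 0 ≤ b) (h1 : b ≤ 1) (F : ℕ → Sym2 (Fin n))
    (hF : ∀ t, F t ∈ edgeGround n)
    (hc : ∀ e, ((Finset.range (4 * k)).filter (fun t => F t = e)).card ≤ 4) :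
    Pr (edgeGround n) b (fun T => ∀ t < 4 * k, F t ∉ T) ≤ (1 - b) ^ k := by
  let N := (Finset.range (4 * k)).image F
  have hN : N ⊆ edgeGround n := by
    intro e he
    obtain ⟨t, _, rfl⟩ := Finset.mem_image.1 he
    exact hF t
  have hcard : k ≤ N.card := by
    have := Finset.card_le_mul_card_image (f := F) (Finset.range (4 * k)) 4 (fun e _ => hc e)
    rw [Finset.card_range] at this
    change 4 * k ≤ 4 * N.card at this
    omega
  have h2 : Pr (edgeGround n) b (fun T => ∀ t < 4 * k, F t ∉ T) ≤
      Pr (edgeGround n) b (fun T => ∀ e ∈ N, e ∉ T) := by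
    apply Pr_mono _ h0 h1
    intro T _ h e he
    obtain ⟨t, ht, rfl⟩ := Finset.mem_image.1 he
    exact h t (Finset.mem_range.1 ht)
  refine h2.trans ?_
  rw [Pr_avoid _ _ _ hN]
  exact pow_le_pow_of_le_one (by linarith) (by linarith) hcard

lemma sum_pow_card {n : ℕ} (x : ℝ) :
    ∑ S : Finset (Fin n), x ^ S.card = (1 + x) ^ n := by
  have := Fintype.sum_pow_mul_eq_add_pow (Fin n) x 1
  simp only [one_pow, mul_one, Fintype.card_fin] at this
  rw [this, add_comm]

lemma Pr_dense {n m : ℕ} {v : ℕ → Fin n} {S : Finset (Sym2 (Fin n))}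
    (hP : IsPathSeq (gr S) m v) (hm : n ≤ m + 2 * (n / 20)) {b : ℝ} (h0 : 0 ≤ b) (h1 : b ≤ 1)
    (k : ℕ) (hk : 4 * k ≤ 2 * m) {ρ : ℝ} (hρ0 : 0 ≤ ρ) (hρ1 : ρ ≤ 1)
    (hρ : (1 - b) ^ (n - 4 * (n / 20)) ≤ ρ ^ 2) :
    Pr (edgeGround n) b (fun T => ¬ ((gr (S ∪ T)).Connected ∧ AC (gr (S ∪ T)) ≤ 8 * k + 1)) ≤
      n ^ 2 * (1 - b) ^ k + (n ^ 2 * (1 - b) ^ k + ((1 + ρ) ^ n - 1) * (1 + ρ) ^ n) := by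
  have hb : 0 ≤ 1 - b := by linarith
  have hb' : 1 - b ≤ 1 := by linarith
  let O := offP m v
  have hOc : O.card + m = n := card_offP hP.inj
  let I1 : Finset (ℕ × ℕ) := (Finset.range m ×ˢ Finset.range m).filter (fun q => q.1 ≠ q.2)
  let B1 : Finset (Sym2 (Fin n)) → Prop := fun T => ∃ q ∈ I1,
    ∀ t < 4 * k, s(v (slotPos m q.1 t), v (slotPos m q.2 t)) ∉ T
  let I2 : Finset (Fin n × ℕ) := O ×ˢ Finset.range m
  let B2 : Finset (Sym2 (Fin n)) → Prop := fun T => ∃ q ∈ I2,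
    ∀ t < 4 * k, s(q.1, v (slotPos m q.2 t)) ∉ T
  let I3 : Finset (Finset (Fin n) × Finset (Fin n)) := Finset.univ.filter
    (fun q => q.1 ≠ ∅ ∧ q.1 ⊆ O ∧ q.2 ⊆ onP m v ∧ q.2.card < q.1.card)
  let B3 : Finset (Sym2 (Fin n)) → Prop := fun T => ∃ q ∈ I3,
    ∀ e ∈ betw q.1 (onP m v \ q.2), e ∉ T
  have b1 : Pr (edgeGround n) b B1 ≤ n ^ 2 * (1 - b) ^ k := by
    refine (Pr_exists _ h0 h1 _ _).trans ?_
    have : ∀ q ∈ I1, Pr (edgeGround n) b (fun T =>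
        ∀ t < 4 * k, s(v (slotPos m q.1 t), v (slotPos m q.2 t)) ∉ T) ≤ (1 - b) ^ k := by
      rintro ⟨i, j⟩ hq
      simp only [I1, Finset.mem_filter, Finset.mem_product, Finset.mem_range] at hq
      obtain ⟨⟨hi, hj⟩, hij⟩ := hq
      refine Pr_image h0 h1 (fun t => s(v (slotPos m i t), v (slotPos m j t))) ?_ ?_
      · intro t
        rw [mem_edgeGround]
        exact slotPos_inj hP.inj hi hj hij
      · intro e
        by_cases hne : ∃ x < m, ∃ y < m, e = s(v x, v y)
        · obtain ⟨x, hx, y, hy, rfl⟩ := hne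
          have c1 := slotPos_count (y := x) hi hk
          have c2 := slotPos_count (y := y) hi hk
          have : (Finset.range (4 * k)).filter (fun t => s(v (slotPos m i t), v (slotPos m j t)) =
              s(v x, v y)) ⊆ (Finset.range (4 * k)).filter (fun t => slotPos m i t = x) ∪
                (Finset.range (4 * k)).filter (fun t => slotPos m i t = y) := by
            intro t ht
            simp only [Finset.mem_filter, Sym2.eq_iff] at ht
            simp only [Finset.mem_union, Finset.mem_filter]
            rcases ht.2 with h | h
            · exact Or.inl ⟨ht.1, hP.inj _ _ (slotPos_lt hi) hx h.1⟩
            · exact Or.inr ⟨ht.1, hP.inj _ _ (slotPos_lt hi) hy h.1⟩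
          have := (Finset.card_le_card this).trans (Finset.card_union_le _ _)
          omega
        · rw [Finset.filter_eq_empty_iff.2]
          · simp
          · intro t _ he
            exact hne ⟨_, slotPos_lt hi, _, slotPos_lt hj, he.symm⟩
    refine (Finset.sum_le_sum this).trans ?_
    rw [Finset.sum_const, nsmul_eq_mul]
    apply mul_le_mul_of_nonneg_right _ (by positivity)
    have h2 : I1.card ≤ n ^ 2 := by
      refine (Finset.card_filter_le _ _).trans ?_
      rw [Finset.card_product, Finset.card_range, pow_two]
      exact Nat.mul_le_mul (by omega) (by omega)
    exact_mod_cast h2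
  have b2 : Pr (edgeGround n) b B2 ≤ n ^ 2 * (1 - b) ^ k := by
    refine (Pr_exists _ h0 h1 _ _).trans ?_
    have : ∀ q ∈ I2, Pr (edgeGround n) b (fun T =>
        ∀ t < 4 * k, s(q.1, v (slotPos m q.2 t)) ∉ T) ≤ (1 - b) ^ k := by
      rintro ⟨u, i⟩ hq
      simp only [I2, Finset.mem_product, Finset.mem_range] at hq
      obtain ⟨hu, hi⟩ := hq
      have huo := mem_offP.1 hu
      refine Pr_image h0 h1 (fun t => s(u, v (slotPos m i t))) ?_ ?_
      · intro t
        rw [mem_edgeGround]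
        exact (huo _ (slotPos_lt hi)).symm
      · intro e
        by_cases hne : ∃ x < m, e = s(u, v x)
        · obtain ⟨x, hx, rfl⟩ := hne
          have c1 := slotPos_count (y := x) hi hk
          have : (Finset.range (4 * k)).filter (fun t => s(u, v (slotPos m i t)) =
              s(u, v x)) ⊆ (Finset.range (4 * k)).filter (fun t => slotPos m i t = x) := by
            intro t ht
            simp only [Finset.mem_filter, Sym2.eq_iff] at ht
            simp only [Finset.mem_filter]
            rcases ht.2 with h | h
            · exact ⟨ht.1, hP.inj _ _ (slotPos_lt hi) hx h.2⟩
            · exact absurd h.1.symm (huo x hx)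
          have := Finset.card_le_card this
          omega
        · rw [Finset.filter_eq_empty_iff.2]
          · simp
          · intro t _ he
            exact hne ⟨_, slotPos_lt hi, he.symm⟩
    refine (Finset.sum_le_sum this).trans ?_
    rw [Finset.sum_const, nsmul_eq_mul]
    apply mul_le_mul_of_nonneg_right _ (by positivity)
    have h2 : I2.card ≤ n ^ 2 := by
      rw [Finset.card_product, Finset.card_range, pow_two]
      exact Nat.mul_le_mul (by omega) (by omega)
    exact_mod_cast h2
  have b3 : Pr (edgeGround n) b B3 ≤ ((1 + ρ) ^ n - 1) * (1 + ρ) ^ n := by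
    refine (Pr_exists _ h0 h1 _ _).trans ?_
    have : ∀ q ∈ I3, Pr (edgeGround n) b (fun T =>
        ∀ e ∈ betw q.1 (onP m v \ q.2), e ∉ T) ≤ ρ ^ q.1.card * ρ ^ q.2.card := by
      rintro ⟨X, Y⟩ hq
      simp only [I3, Finset.mem_filter, Finset.mem_univ, true_and] at hq
      obtain ⟨q1, q2, q3, q4⟩ := hq
      have hd : Disjoint X (onP m v \ Y) := by
        rw [Finset.disjoint_left]
        intro x hx hx'
        exact not_mem_onP.2 (q2 hx) (Finset.mem_sdiff.1 hx').1
      have hc1 : (onP m v \ Y).card + Y.card = m := by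
        rw [Finset.card_sdiff_add_card_eq_card q3, card_onP hP.inj]
      have hc2 := Finset.card_le_card q2
      dsimp only
      rw [Pr_betw b hd]
      calc (1 - b) ^ (X.card * (onP m v \ Y).card) ≤ (1 - b) ^ (X.card * (n - 4 * (n / 20))) := by
            apply pow_le_pow_of_le_one hb hb'
            exact Nat.mul_le_mul le_rfl (by omega)
        _ = ((1 - b) ^ (n - 4 * (n / 20))) ^ X.card := by rw [mul_comm, pow_mul]
        _ ≤ (ρ ^ 2) ^ X.card := pow_le_pow_left₀ (by positivity) hρ _
        _ = ρ ^ X.card * ρ ^ X.card := by rw [← pow_mul, ← pow_add]; congr 1; ring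
        _ ≤ ρ ^ X.card * ρ ^ Y.card := by
            apply mul_le_mul_of_nonneg_left _ (by positivity)
            exact pow_le_pow_of_le_one hρ0 hρ1 q4.le
    refine (Finset.sum_le_sum this).trans ?_
    have hsub : I3 ⊆ (Finset.univ.erase ∅) ×ˢ Finset.univ := by
      rintro ⟨X, Y⟩ hq
      simp only [I3, Finset.mem_filter, Finset.mem_univ, true_and] at hq
      simp [hq.1]
    refine (Finset.sum_le_sum_of_subset_of_nonneg hsub (fun _ _ _ => by positivity)).trans ?_
    rw [Finset.sum_product, ← sum_pow_card ρ]
    simp_rw [← Finset.mul_sum]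
    rw [← Finset.sum_mul]
    apply le_of_eq
    congr 1
    have := Finset.add_sum_erase Finset.univ (fun X : Finset (Fin n) => ρ ^ X.card)
      (Finset.mem_univ ∅)
    simp only [Finset.card_empty, pow_zero] at this
    linarith
  have main : ∀ T ⊆ edgeGround n,
      ¬ ((gr (S ∪ T)).Connected ∧ AC (gr (S ∪ T)) ≤ 8 * k + 1) → B1 T ∨ (B2 T ∨ B3 T) := by
    intro T hT hbad
    by_contra hcon
    push Not at hcon
    obtain ⟨n1, n2, n3⟩ := hcon
    apply hbad
    have tadj : ∀ x y, s(x, y) ∈ T → (gr (S ∪ T)).Adj x y := by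
      intro x y h
      rw [gr_adj]
      exact ⟨Finset.mem_union_right _ h, mem_edgeGround.1 (hT h)⟩
    have hP' : IsPathSeq (gr (S ∪ T)) m v := path_mono hP (by
      intro x y h
      rw [gr_adj] at h ⊢
      exact ⟨Finset.mem_union_left _ h.1, h.2⟩)
    let tt : {u // u ∈ O} → Finset ℕ := fun u => (Finset.range m).filter (fun x => s(u.1, v x) ∈ T)
    have hall : ∀ s : Finset {u // u ∈ O}, s.card ≤ (s.biUnion tt).card := by
      intro A
      by_contra hlt
      push Not at hlt
      apply n3
      refine ⟨(A.map (Function.Embedding.subtype _), (A.biUnion tt).image v), ?_, ?_⟩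
      · simp only [I3, Finset.mem_filter, Finset.mem_univ, true_and]
        refine ⟨?_, ?_, ?_, ?_⟩
        · intro h
          rw [Finset.map_eq_empty] at h
          rw [h] at hlt
          simp at hlt
        · intro x hx
          rw [Finset.mem_map] at hx
          obtain ⟨y, _, rfl⟩ := hx
          exact y.2
        · intro x hx
          obtain ⟨y, hy, rfl⟩ := Finset.mem_image.1 hx
          obtain ⟨u, _, hu⟩ := Finset.mem_biUnion.1 hy
          simp only [tt, Finset.mem_filter, Finset.mem_range] at hu
          exact mem_onP.2 ⟨y, hu.1, rfl⟩
        · rw [Finset.card_map]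
          exact lt_of_le_of_lt Finset.card_image_le hlt
      · intro e he heT
        obtain ⟨x, hx, y, hy, rfl⟩ := mem_betw.1 he
        dsimp only at hx hy
        rw [Finset.mem_map] at hx
        obtain ⟨u, hu, rfl⟩ := hx
        rw [Finset.mem_sdiff] at hy
        obtain ⟨z, hz, rfl⟩ := mem_onP.1 hy.1
        apply hy.2
        refine Finset.mem_image_of_mem _ (Finset.mem_biUnion.2 ⟨u, hu, ?_⟩)
        simp only [tt, Finset.mem_filter, Finset.mem_range]
        exact ⟨hz, heT⟩
    obtain ⟨f, finj, hf⟩ := (Finset.all_card_le_biUnion_card_iff_exists_injective tt).1 hall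
    simp only [tt, Finset.mem_filter, Finset.mem_range] at hf
    have := case_dense hP' (fun u => u ∈ O) (fun u => if h : u ∈ O then f ⟨u, h⟩ else 0) (4 * k)
      ?_ ?_ ?_ ?_ ?_ ?_ ?_
    · rw [show 2 * (4 * k) + 1 = 8 * k + 1 by ring] at this
      exact this
    · intro u
      by_cases h : u ∈ onP m v
      · exact Or.inl (mem_onP.1 h)
      · exact Or.inr (not_mem_onP.1 h)
    · intro u hu
      simp only [dif_pos hu]
      exact (hf ⟨u, hu⟩).1
    · intro u u' hu hu' h
      simp only [dif_pos hu, dif_pos hu'] at h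
      simpa using finj h
    · intro u hu; exact mem_offP.1 hu
    · intro u hu
      simp only [dif_pos hu]
      exact tadj _ _ (hf ⟨u, hu⟩).2
    · intro i hi j hj hij
      by_contra hno
      push Not at hno
      apply n1
      refine ⟨(i, j), ?_, ?_⟩
      · simp only [I1, Finset.mem_filter, Finset.mem_product, Finset.mem_range]
        exact ⟨⟨hi, hj⟩, hij⟩
      · intro t ht h
        exact hno t ht (tadj _ _ h)
    · intro u hu i hi
      by_contra hno
      push Not at hno
      apply n2
      refine ⟨(u, i), ?_, ?_⟩
      · simp only [I2, Finset.mem_product, Finset.mem_range]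
        exact ⟨hu, hi⟩
      · intro t ht h
        exact hno t ht (tadj _ _ h)
  refine (Pr_mono _ h0 h1 main).trans ((Pr_or _ h0 h1 _ _).trans (add_le_add b1 ?_))
  exact (Pr_or _ h0 h1 _ _).trans (add_le_add b2 b3)

/-! ### Numerical estimates -/

lemma one_sub_pow_le {b x : ℝ} {k : ℕ} (h1 : b ≤ 1) (h : x ≤ b * k) :
    (1 - b) ^ k ≤ Real.exp (-x) := by
  have h2 : 1 - b ≤ Real.exp (-b) := by
    have := Real.add_one_le_exp (-b)
    linarith
  calc (1 - b) ^ k ≤ (Real.exp (-b)) ^ k := pow_le_pow_left₀ (by linarith) h2 k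
    _ = Real.exp (k * (-b)) := by rw [← Real.exp_nat_mul]
    _ ≤ Real.exp (-x) := Real.exp_le_exp.2 (by nlinarith)

/-- The error term for the sparse case. -/
noncomputable def errS (L : ℝ) : ℝ :=
  Real.exp 1 / L + (100 * L * Real.exp (-(0.8 * L)) + 10000 * (L ^ 2 * Real.exp (-(0.8 * L))))

/-- The error term for the dense case. -/
noncomputable def errD (L : ℝ) : ℝ :=
  Real.exp (-(2 * L)) + (Real.exp (-(2 * L)) +
    (Real.exp (Real.exp (-L)) - 1) * Real.exp (Real.exp (-L)))

lemma errS_nonneg {L : ℝ} (h : 0 < L) : 0 ≤ errS L := by unfold errS; positivity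

lemma errD_nonneg {L : ℝ} : 0 ≤ errD L := by
  unfold errD
  have : 1 ≤ Real.exp (Real.exp (-L)) := Real.one_le_exp (Real.exp_pos _).le
  have h2 : 0 ≤ Real.exp (Real.exp (-L)) - 1 := by linarith
  positivity

lemma Pr_path_num {n : ℕ} (hn : 2400 ≤ n) :
    Pr (edgeGround n) (1200 / n) (fun S => ¬ PathEv S) ≤ Real.exp (-n) := by
  have hn' : (2400 : ℝ) ≤ n := by exact_mod_cast hn
  have hpos : (0 : ℝ) < n := by linarith
  have h1 : (1200 : ℝ) / n ≤ 1 := by rw [div_le_one hpos]; linarith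
  refine (Pr_path (by omega) (by positivity) h1).trans ?_
  have hk : (n : ℝ) / 20 ≤ ((n / 20 + 1 : ℕ) : ℝ) := by
    have : n ≤ 20 * (n / 20 + 1) := by omega
    have : (n : ℝ) ≤ 20 * ((n / 20 + 1 : ℕ) : ℝ) := by exact_mod_cast this
    linarith
  have h2 : (1 - 1200 / (n : ℝ)) ^ ((n / 20 + 1) * (n / 20 + 1)) ≤ Real.exp (-(3 * n)) := by
    apply one_sub_pow_le h1
    rw [Nat.cast_mul]
    have h3 : (n : ℝ) / 20 * (n / 20) ≤ ((n / 20 + 1 : ℕ) : ℝ) * ((n / 20 + 1 : ℕ) : ℝ) :=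
      mul_le_mul hk hk (by positivity) (by positivity)
    calc (3 : ℝ) * n = 1200 / n * (n / 20 * (n / 20)) := by field_simp; norm_num
      _ ≤ _ := mul_le_mul_of_nonneg_left h3 (by positivity)
  have h4 : (4 : ℝ) ^ n ≤ Real.exp (2 * n) := by
    have : (4 : ℝ) ≤ Real.exp 2 := by
      have h := Real.add_one_le_exp (1 : ℝ)
      rw [show (2 : ℝ) = 1 + 1 by norm_num, Real.exp_add]
      nlinarith
    calc (4 : ℝ) ^ n ≤ (Real.exp 2) ^ n := pow_le_pow_left₀ (by norm_num) this n
      _ = Real.exp (2 * n) := by rw [← Real.exp_nat_mul]; ring_nf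
  calc (4 : ℝ) ^ n * (1 - 1200 / (n : ℝ)) ^ ((n / 20 + 1) * (n / 20 + 1))
      ≤ Real.exp (2 * n) * Real.exp (-(3 * n)) := by
        apply mul_le_mul h4 h2 (pow_nonneg (by linarith) _) (Real.exp_pos _).le
    _ = Real.exp (-n) := by rw [← Real.exp_add]; ring_nf

lemma sparse_num {n m : ℕ} {b L : ℝ} (hn : 1 ≤ n) (hL : 0 < L) (hnL : Real.exp L = n)
    (hm : n ≤ m + 2 * (n / 20)) (h0 : 0 ≤ b) (h1 : b ≤ 1)
    (hlow : L + Real.log L ≤ b * n) (hlog : 0 ≤ Real.log L) (hup : b * n ≤ 100 * L) :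
    n * (1 - b) ^ (n - 1) + (n ^ 2 * (b * (1 - b) ^ (2 * m)) +
        n ^ 3 * (b ^ 2 * (1 - b) ^ (2 * m))) ≤ errS L := by
  have hpos : (0 : ℝ) < n := by exact_mod_cast hn
  have e1 : n * (1 - b) ^ (n - 1) ≤ Real.exp 1 / L := by
    have : (1 - b) ^ (n - 1) ≤ Real.exp (-(L + Real.log L - 1)) := by
      apply one_sub_pow_le h1
      rw [Nat.cast_sub hn]
      push_cast
      linarith
    calc n * (1 - b) ^ (n - 1) ≤ Real.exp L * Real.exp (-(L + Real.log L - 1)) := by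
          rw [hnL]; exact mul_le_mul_of_nonneg_left this hpos.le
      _ = Real.exp 1 / L := by
          rw [← Real.exp_add, show L + -(L + Real.log L - 1) = 1 - Real.log L by ring,
            Real.exp_sub, Real.exp_log hL]
  have e2 : (1 - b) ^ (2 * m) ≤ Real.exp (-(1.8 * L)) := by
    apply one_sub_pow_le h1
    have h3 : 9 * n ≤ 10 * m := by omega
    have h4 : (9 : ℝ) * n ≤ 10 * m := by exact_mod_cast h3
    push_cast
    have : b * (9 * n) ≤ b * (10 * m) := mul_le_mul_of_nonneg_left h4 h0
    linarith
  have e3 : (n : ℝ) * Real.exp (-(1.8 * L)) = Real.exp (-(0.8 * L)) := by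
    rw [← hnL, ← Real.exp_add]; ring_nf
  have hbn : 0 ≤ b * n := by positivity
  unfold errS
  refine add_le_add e1 (add_le_add ?_ ?_)
  · calc (n : ℝ) ^ 2 * (b * (1 - b) ^ (2 * m)) ≤ n ^ 2 * (b * Real.exp (-(1.8 * L))) := by gcongr
      _ = (b * n) * (n * Real.exp (-(1.8 * L))) := by ring
      _ ≤ 100 * L * Real.exp (-(0.8 * L)) := by
          rw [e3]; exact mul_le_mul_of_nonneg_right hup (Real.exp_pos _).le
  · calc (n : ℝ) ^ 3 * (b ^ 2 * (1 - b) ^ (2 * m)) ≤ n ^ 3 * (b ^ 2 * Real.exp (-(1.8 * L))) := by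
          gcongr
      _ = (b * n) ^ 2 * (n * Real.exp (-(1.8 * L))) := by ring
      _ ≤ (100 * L) ^ 2 * Real.exp (-(0.8 * L)) := by
          rw [e3]; gcongr
      _ = 10000 * (L ^ 2 * Real.exp (-(0.8 * L))) := by ring

lemma dense_num {n k : ℕ} {b L : ℝ} (hnL : Real.exp L = n)
    (h1 : b ≤ 1) (hk : 4 * L ≤ b * k) :
    n ^ 2 * (1 - b) ^ k + (n ^ 2 * (1 - b) ^ k +
      ((1 + Real.exp (-(2 * L))) ^ n - 1) * (1 + Real.exp (-(2 * L))) ^ n) ≤ errD L := by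
  have e1 : (n : ℝ) ^ 2 * (1 - b) ^ k ≤ Real.exp (-(2 * L)) := by
    calc (n : ℝ) ^ 2 * (1 - b) ^ k ≤ n ^ 2 * Real.exp (-(4 * L)) :=
          mul_le_mul_of_nonneg_left (one_sub_pow_le h1 hk) (by positivity)
      _ = Real.exp (-(2 * L)) := by
          rw [← hnL, ← Real.exp_nat_mul, ← Real.exp_add]; push_cast; ring_nf
  have e2 : (1 + Real.exp (-(2 * L))) ^ n ≤ Real.exp (Real.exp (-L)) := by
    calc (1 + Real.exp (-(2 * L))) ^ n ≤ (Real.exp (Real.exp (-(2 * L)))) ^ n := by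
          apply pow_le_pow_left₀ (by positivity)
          rw [add_comm]; exact Real.add_one_le_exp _
      _ = Real.exp (n * Real.exp (-(2 * L))) := by rw [← Real.exp_nat_mul]
      _ = Real.exp (Real.exp (-L)) := by
          rw [← hnL, ← Real.exp_add]; ring_nf
  have e3 : 1 ≤ (1 + Real.exp (-(2 * L))) ^ n := one_le_pow₀ (by linarith [Real.exp_pos (-(2 * L))])
  unfold errD
  refine add_le_add e1 (add_le_add e1 ?_)
  apply mul_le_mul (by linarith) e2 (by linarith) (by linarith)

set_option maxHeartbeats 1000000 in
lemma main_bound {n : ℕ} {p : ℝ} (hp0 : 0 ≤ p) (hp1 : p ≤ 1) (hL : 1200 ≤ Real.log n)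
    (hp : Real.log n + Real.log (Real.log n) + 1200 ≤ p * n) :
    1 - (Real.exp (-n) + (errS (Real.log n) + errD (Real.log n))) ≤
      gnpProb n p (fun G => G.Connected ∧ (AC G : ℝ) ≤ 3000 * Real.log n / p) := by
  set L := Real.log n with hLd
  have hpos : (0 : ℝ) < n := by
    rcases Nat.eq_zero_or_pos n with h | h
    · rw [h] at hLd; simp at hLd; linarith
    · exact_mod_cast h
  have hn1 : 1 ≤ n := by exact_mod_cast hpos
  have hnL : Real.exp L = n := Real.exp_log hpos
  have hL0 : 0 < L := by linarith
  have hlog : 0 ≤ Real.log L := Real.log_nonneg (by linarith)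
  have hnn : L * L / 4 ≤ n := by
    have h1 := Real.add_one_le_exp (L / 2)
    have h2 : Real.exp L = Real.exp (L / 2) * Real.exp (L / 2) := by
      rw [← Real.exp_add]; ring_nf
    rw [← hnL, h2]
    nlinarith
  have hnbig : (2400 : ℝ) ≤ n := by nlinarith
  have hn2400 : 2400 ≤ n := by exact_mod_cast hnbig
  set a : ℝ := 1200 / n with ha
  have ha0 : 0 ≤ a := by positivity
  have ha2 : a ≤ 1 / 2 := by rw [ha, div_le_iff₀ hpos]; linarith
  have han : a * n = 1200 := by rw [ha]; field_simp
  have hpa : a ≤ p := by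
    have : a * n ≤ p * n := by rw [han]; linarith
    exact le_of_mul_le_mul_right this hpos
  set b : ℝ := (p - a) / (1 - a) with hb
  have h1a : 0 < 1 - a := by linarith
  have hb0 : 0 ≤ b := div_nonneg (by linarith) h1a.le
  have hb1 : b ≤ 1 := by rw [hb, div_le_one h1a]; linarith
  have hbe : b * (1 - a) = p - a := by rw [hb]; field_simp
  have hbp : p - a ≤ b := by nlinarith
  have hpab : p ≤ a + b := by nlinarith
  have hbn : L + Real.log L ≤ b * n := by nlinarith
  have hpn : p * n ≤ 1200 + b * n := by nlinarith
  have hp_pos : 0 < p := by nlinarith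
  have hS := errS_nonneg hL0
  have hD := errD_nonneg (L := L)
  rw [gnpProb_eq, Pr_compl]
  have key := Pr_two_round (edgeGround n) (a := a) (b := b) (p := p) (δ := errS L + errD L)
    ha0 (by linarith) hb0 hb1 (by nlinarith)
    (fun S => (gr S).Connected ∧ (AC (gr S) : ℝ) ≤ 3000 * L / p) PathEv (by linarith) ?_
  · have := Pr_path_num hn2400
    linarith
  · rintro S hS' ⟨m, v, hP, hm⟩
    have hmn : (offP m v).card + m = n := card_offP hP.inj
    have hmn' : (m : ℝ) ≤ n := by exact_mod_cast (show m ≤ n by omega)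
    by_cases hc : b * n ≤ 100 * L
    · have h1 : Pr (edgeGround n) b (fun T => ¬ ((gr (S ∪ T)).Connected ∧
          (AC (gr (S ∪ T)) : ℝ) ≤ 3000 * L / p)) ≤ errS L := by
        refine (Pr_mono _ hb0 hb1 ?_).trans ((Pr_sparse hP hm hb0 hb1).trans
          (sparse_num hn1 hL0 hnL hm hb0 hb1 hbn hlog hc))
        intro T _ hT hgood
        apply hT
        refine ⟨hgood.1, ?_⟩
        have h2 : (AC (gr (S ∪ T)) : ℝ) ≤ 18 * m + 2 := by exact_mod_cast hgood.2
        rw [le_div_iff₀ hp_pos]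
        have h3 : (AC (gr (S ∪ T)) : ℝ) ≤ 20 * n := by linarith
        calc (AC (gr (S ∪ T)) : ℝ) * p ≤ 20 * n * p := mul_le_mul_of_nonneg_right h3 hp0
          _ = 20 * (p * n) := by ring
          _ ≤ 3000 * L := by linarith
      linarith
    · push Not at hc
      have hbpos : 0 < b := by
        by_contra h
        have : b = 0 := by linarith
        rw [this] at hc; linarith
      set k := ⌈4 * L / b⌉₊ with hk
      have hk1 : 4 * L / b ≤ k := Nat.le_ceil _
      have hk2 : (k : ℝ) < 4 * L / b + 1 := Nat.ceil_lt_add_one (by positivity)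
      have hk1' : 4 * L ≤ b * k := by
        rw [div_le_iff₀ hbpos] at hk1; linarith
      have hLb : 4 * L / b ≤ n / 25 := by
        rw [div_le_iff₀ hbpos]; linarith
      have hkm : 4 * k ≤ 2 * m := by
        have h3 : 9 * n ≤ 10 * m := by omega
        have h4 : (9 : ℝ) * n ≤ 10 * m := by exact_mod_cast h3
        have : (4 : ℝ) * k ≤ 2 * m := by linarith
        exact_mod_cast this
      have hρ : (1 - b) ^ (n - 4 * (n / 20)) ≤ (Real.exp (-(2 * L))) ^ 2 := by
        rw [← Real.exp_nat_mul]
        push_cast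
        rw [show 2 * -(2 * L) = -(4 * L) by ring]
        apply one_sub_pow_le hb1
        have h3 : n ≤ 2 * (n - 4 * (n / 20)) := by omega
        have h4 : (n : ℝ) ≤ 2 * ((n - 4 * (n / 20) : ℕ) : ℝ) := by exact_mod_cast h3
        have := mul_le_mul_of_nonneg_left h4 hb0
        linarith
      have h1 : Pr (edgeGround n) b (fun T => ¬ ((gr (S ∪ T)).Connected ∧
          (AC (gr (S ∪ T)) : ℝ) ≤ 3000 * L / p)) ≤ errD L := by
        refine (Pr_mono _ hb0 hb1 ?_).trans (Pr_dense hP hm hb0 hb1 k hkm (Real.exp_pos _).le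
          (Real.exp_le_one_iff.2 (by linarith)) hρ |>.trans (dense_num hnL hb1 hk1'))
        intro T _ hT hgood
        apply hT
        refine ⟨hgood.1, ?_⟩
        have h2 : (AC (gr (S ∪ T)) : ℝ) ≤ 8 * k + 1 := by exact_mod_cast hgood.2
        have hab : a ≤ b := by
          have : a * n ≤ b * n := by rw [han]; linarith
          exact le_of_mul_le_mul_right this hpos
        rw [le_div_iff₀ hp_pos]
        have hAC : (0 : ℝ) ≤ AC (gr (S ∪ T)) := Nat.cast_nonneg _
        have h5 : b * (4 * L / b) = 4 * L := by field_simp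
        have h6 : b * k ≤ 4 * L + b := by
          have := mul_le_mul_of_nonneg_left hk2.le hb0
          rw [mul_add, h5] at this
          linarith
        calc (AC (gr (S ∪ T)) : ℝ) * p ≤ (8 * k + 1) * (2 * b) :=
              mul_le_mul h2 (by linarith) hp0 (by positivity)
          _ = 16 * (b * k) + 2 * b := by ring
          _ ≤ 3000 * L := by linarith
      linarith

lemma errS_tendsto : Filter.Tendsto errS Filter.atTop (nhds 0) := by
  unfold errS
  have h8 : Filter.Tendsto (fun L : ℝ => 0.8 * L) Filter.atTop Filter.atTop :=
    Filter.tendsto_id.const_mul_atTop (by norm_num)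
  have e1 : Filter.Tendsto (fun L : ℝ => Real.exp 1 / L) Filter.atTop (nhds 0) :=
    Filter.tendsto_id.const_div_atTop _
  have e2 := ((Real.tendsto_pow_mul_exp_neg_atTop_nhds_zero 1).comp h8).const_mul (125 : ℝ)
  have e3 := ((Real.tendsto_pow_mul_exp_neg_atTop_nhds_zero 2).comp h8).const_mul (15625 : ℝ)
  have := e1.add (e2.add e3)
  simp only [mul_zero, add_zero] at this
  refine this.congr ?_
  intro L
  simp only [Function.comp]
  ring

lemma errD_tendsto : Filter.Tendsto errD Filter.atTop (nhds 0) := by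
  unfold errD
  have h2 : Filter.Tendsto (fun L : ℝ => 2 * L) Filter.atTop Filter.atTop :=
    Filter.tendsto_id.const_mul_atTop (by norm_num)
  have e1 : Filter.Tendsto (fun L : ℝ => Real.exp (-(2 * L))) Filter.atTop (nhds 0) :=
    Real.tendsto_exp_neg_atTop_nhds_zero.comp h2
  have e2 : Filter.Tendsto (fun L : ℝ => Real.exp (Real.exp (-L))) Filter.atTop (nhds 1) := by
    have := (Real.continuous_exp.tendsto 0).comp Real.tendsto_exp_neg_atTop_nhds_zero
    rw [Real.exp_zero] at this
    exact this
  have := e1.add (e1.add ((e2.sub_const 1).mul e2))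
  simpa using this

lemma gnpProb_le_one {n : ℕ} {p : ℝ} (h0 : 0 ≤ p) (h1 : p ≤ 1) (A : SimpleGraph (Fin n) → Prop) :
    gnpProb n p A ≤ 1 := by
  rw [gnpProb_eq, Pr_compl]
  have := Pr_nonneg (edgeGround n) h0 h1 (fun S => ¬ A (gr S))
  linarith

/-- There is a constant `C > 0` such that: whenever `p(n)·n − log n − log log n → ∞` and
`0 ≤ p(n) ≤ 1` for all `n`, a.a.s. `G ∈ G(n, p(n))` is connected and satisfies
`AC(G) ≤ C log n / p(n)`. -/
theorem AC_gnp_upper_above_hamiltonicity :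
    ∃ C : ℝ, 0 < C ∧ ∀ p : ℕ → ℝ,
      (∀ n : ℕ, 0 ≤ p n ∧ p n ≤ 1) →
      Filter.Tendsto (fun n : ℕ => p n * n - Real.log n - Real.log (Real.log n))
        Filter.atTop Filter.atTop →
      Filter.Tendsto
        (fun n : ℕ => gnpProb n (p n) (fun G : SimpleGraph (Fin n) =>
          G.Connected ∧ (AC G : ℝ) ≤ C * Real.log n / p n))
        Filter.atTop (nhds 1) := by

  refine ⟨3000, by norm_num, ?_⟩
  intro p hp hlim
  have hlog : Filter.Tendsto (fun n : ℕ => Real.log n) Filter.atTop Filter.atTop :=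
    Real.tendsto_log_atTop.comp tendsto_natCast_atTop_atTop
  have herr : Filter.Tendsto (fun n : ℕ => 1 - (Real.exp (-(n : ℝ)) +
      (errS (Real.log n) + errD (Real.log n)))) Filter.atTop (nhds 1) := by
    have e0 : Filter.Tendsto (fun n : ℕ => Real.exp (-(n : ℝ))) Filter.atTop (nhds 0) :=
      Real.tendsto_exp_neg_atTop_nhds_zero.comp tendsto_natCast_atTop_atTop
    have := (e0.add ((errS_tendsto.comp hlog).add (errD_tendsto.comp hlog))).const_sub 1
    simpa using this
  refine tendsto_of_tendsto_of_tendsto_of_le_of_le' herr tendsto_const_nhds ?_ ?_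
  · filter_upwards [hlog.eventually_ge_atTop 1200, hlim.eventually_ge_atTop 1200] with n h1 h2
    exact main_bound (hp n).1 (hp n).2 h1 (by linarith)
  · exact Filter.Eventually.of_forall fun n => gnpProb_le_one (hp n).1 (hp n).2 _
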